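/- For each κ ≥ 20 there is a constant C(κ) such that for each integer ℓ₀ ≥ C(κ) there exist K = K(κ,ℓ₀) ≥ 100 and constants c₁ = c₁(κ,ℓ₀), c₂ = c₂(κ,ℓ₀) ∈ (0,1) with the following property: for every integer L₀ ≥ C'(κ,ℓ₀) (for a suitable constant C'(κ,ℓ₀)), if the families F and H_n (n ≥ 1) satisfy (C1) and (C2), together with the bounds P[complement of F_{0,x}] ≤ c₁ for every x ∈ 𝕃₀ and P[complement of H_{n,x}] ≤ c₂·2^{−2^n} for every n ≥ 1 and x ∈ 𝕃_n, then P[𝒢_{n,x}] ≥ 1 − 2^{−2^n} for every n ≥ 0 and every x ∈ 𝕃_n. -/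

import Mathlib

open MeasureTheory ProbabilityTheory Filter Set

namespace GFFperc

noncomputable section

/-- The lattice `ℤ^d`. -/
abbrev V (d : ℕ) := Fin d → ℤ

/-- Nearest-neighbour adjacency on `ℤ^d`. -/
def adj {d : ℕ} (x y : V d) : Prop := (∑ i, (x i - y i).natAbs) = 1

/-- `ℓ∞` distance between two points. -/
def dinf {d : ℕ} (x y : V d) : ℕ := Finset.univ.sup fun i => (x i - y i).natAbs

/-- `A` and `B` are joined by a nearest-neighbour path contained in `S`. -/
def ConnIn {d : ℕ} (S A B : Set (V d)) : Prop :=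
  ∃ (n : ℕ) (γ : ℕ → V d), γ 0 ∈ A ∧ γ n ∈ B ∧ (∀ k, k ≤ n → γ k ∈ S) ∧
    ∀ k, k < n → adj (γ k) (γ (k + 1))

/-- A set is connected: any two of its points are joined inside it. -/
def IsConnSet {d : ℕ} (S : Set (V d)) : Prop := ∀ x ∈ S, ∀ y ∈ S, ConnIn S {x} {y}

/-- The connected component of `x` in `S`. -/
def comp {d : ℕ} (S : Set (V d)) (x : V d) : Set (V d) := {y | ConnIn S {x} {y}}

/-- Box of (real) radius `r` centered at `x`. -/
def boxAt {d : ℕ} (x : V d) (r : ℝ) : Set (V d) := {y | ∀ i, |(y i : ℝ) - (x i : ℝ)| ≤ r}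

def box (d : ℕ) (r : ℝ) : Set (V d) := boxAt (0 : V d) r

/-- Inner vertex boundary of the box of radius `r` centered at `x`. -/
def bdryAt {d : ℕ} (x : V d) (r : ℝ) : Set (V d) :=
  {y | y ∈ boxAt x r ∧ ∃ z, z ∉ boxAt x r ∧ adj y z}

def bdry (d : ℕ) (r : ℝ) : Set (V d) := bdryAt (0 : V d) r

/-- `A` is connected to infinity within `S`. -/
def ConnToInf {d : ℕ} (S A : Set (V d)) : Prop := ∀ R : ℕ, 1 ≤ R → ConnIn S A (bdry d R)

/-- The `ℓ∞`-diameter of `S` is at least `r`. -/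
def diamGE {d : ℕ} (S : Set (V d)) (r : ℝ) : Prop := ∃ x ∈ S, ∃ y ∈ S, r ≤ (dinf x y : ℝ)

def unitV (d : ℕ) (i : Fin d) : V d := fun j => if j = i then 1 else 0

/-- `k`-step transition probabilities of simple random walk on `ℤ^d`. -/
def srwP (d : ℕ) : ℕ → V d → V d → ℝ
  | 0, x, y => if x = y then 1 else 0
  | (k + 1), x, y =>
      (1 / (2 * d)) * ∑ i : Fin d, (srwP d k (x + unitV d i) y + srwP d k (x - unitV d i) y)

/-- Green function of simple random walk on `ℤ^d`. -/
def green (d : ℕ) (x y : V d) : ℝ := ∑' k : ℕ, srwP d k x y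

/-- `ℓ`-step transition kernel of the lazy simple random walk on `ℤ^d`. -/
def lazyP (d : ℕ) : ℕ → V d → V d → ℝ
  | 0, x, y => if x = y then 1 else 0
  | (k + 1), x, y =>
      (1 / 2) * lazyP d k x y +
        (1 / (4 * d)) * ∑ i : Fin d, (lazyP d k (x + unitV d i) y + lazyP d k (x - unitV d i) y)

/-- `φ` is a centered Gaussian field with covariance function `C`: every finite linear
combination is a centered Gaussian variable with the corresponding variance. -/
def IsCGF {Ω : Type*} [MeasurableSpace Ω] {d : ℕ} (P : Measure Ω)
    (φ : V d → Ω → ℝ) (C : V d → V d → ℝ) : Prop :=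
  (∀ x, Measurable (φ x)) ∧
    ∀ (s : Finset (V d)) (a : V d → ℝ),
      Measure.map (fun ω => ∑ x ∈ s, a x * φ x ω) P =
        gaussianReal 0 (Real.toNNReal (∑ x ∈ s, ∑ y ∈ s, a x * a y * C x y))

/-- `φ` is a Gaussian free field on `ℤ^d`. -/
def IsGFF {Ω : Type*} [MeasurableSpace Ω] {d : ℕ} (P : Measure Ω) (φ : V d → Ω → ℝ) : Prop :=
  IsCGF P φ (green d)

/-- The level set `{φ ≥ h}`. -/
def lvl {d : ℕ} {Ω : Type*} (φ : V d → Ω → ℝ) (h : ℝ) (ω : Ω) : Set (V d) := {x | h ≤ φ x ω}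

/-- The whole field, as one random variable with values in `V d → ℝ`. -/
def proc {Ω : Type*} {d : ℕ} (φ : V d → Ω → ℝ) : Ω → V d → ℝ := fun ω x => φ x ω

/-- The critical parameter `h_*`. -/
def hStar (d : ℕ) {Ω : Type*} [MeasurableSpace Ω] (P : Measure Ω) (φ : V d → Ω → ℝ) : ℝ :=
  sInf {h : ℝ | P {ω | ConnToInf (lvl φ h ω) {(0 : V d)}} = 0}

/-- The critical parameter `h_{**}`. -/
def hStarStar (d : ℕ) {Ω : Type*} [MeasurableSpace Ω] (P : Measure Ω) (φ : V d → Ω → ℝ) : ℝ :=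
  sInf {h : ℝ |
    (⨅ R : ℕ, P {ω | ConnIn (lvl φ h ω) (box d ((R : ℝ) + 1)) (bdry d (2 * ((R : ℝ) + 1)))}) = 0}

/-- `u(R) = exp((log R)^{1/3})`. -/
def ufn (R : ℝ) : ℝ := Real.exp (Real.log R ^ ((1 : ℝ) / 3))

def tildeSet (d : ℕ) {Ω : Type*} [MeasurableSpace Ω] (P : Measure Ω) (φ : V d → Ω → ℝ) :
    Set ℝ :=
  {h : ℝ |
    (⨅ R : ℕ, ENNReal.ofReal (((R : ℝ) + 1) ^ d) *
        P {ω | ¬ ConnIn (lvl φ h ω) (box d (ufn ((R : ℝ) + 1))) (bdry d ((R : ℝ) + 1))}) = 0}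

/-- The critical parameter `h̃`. -/
def hTilde (d : ℕ) {Ω : Type*} [MeasurableSpace Ω] (P : Measure Ω) (φ : V d → Ω → ℝ) : ℝ :=
  sSup (tildeSet d P φ)

/-- The event `Exist(R,α)`. -/
def ExistEv (d : ℕ) {Ω : Type*} (φ : V d → Ω → ℝ) (R : ℕ) (α : ℝ) : Set Ω :=
  {ω | ∃ x ∈ lvl φ α ω ∩ box d (R : ℝ),
    diamGE (comp (lvl φ α ω ∩ box d (R : ℝ)) x) ((R : ℝ) / 5)}

/-- The event `Unique(R,α)`. -/
def UniqueEv (d : ℕ) {Ω : Type*} (φ : V d → Ω → ℝ) (R : ℕ) (α : ℝ) : Set Ω :=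
  {ω | ∀ x ∈ lvl φ α ω ∩ box d (R : ℝ), ∀ y ∈ lvl φ α ω ∩ box d (R : ℝ),
    diamGE (comp (lvl φ α ω ∩ box d (R : ℝ)) x) ((R : ℝ) / 10) →
    diamGE (comp (lvl φ α ω ∩ box d (R : ℝ)) y) ((R : ℝ) / 10) →
    ConnIn (lvl φ α ω ∩ box d (2 * (R : ℝ))) {x} {y}}

/-- `φ` strongly percolates up to level `h`. -/
def StronglyPerc (d : ℕ) {Ω : Type*} [MeasurableSpace Ω] (P : Measure Ω)
    (φ : V d → Ω → ℝ) (h : ℝ) : Prop :=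
  ∃ c : ℝ, 0 < c ∧ ∃ ρ : ℝ, ρ ∈ Set.Ioc (0 : ℝ) 1 ∧
    ∀ α : ℝ, α ≤ h → ∀ R : ℕ, 1 ≤ R →
      ENNReal.ofReal (1 - Real.exp (-c * (R : ℝ) ^ ρ)) ≤ P (ExistEv d φ R α) ∧
      ENNReal.ofReal (1 - Real.exp (-c * (R : ℝ) ^ ρ)) ≤ P (UniqueEv d φ R α)

/-- The critical parameter `h̄`. -/
def hBar (d : ℕ) {Ω : Type*} [MeasurableSpace Ω] (P : Measure Ω) (φ : V d → Ω → ℝ) : ℝ :=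
  sSup {h : ℝ | StronglyPerc d P φ h}


/-- Box with integer radius `r` centered at `x`. -/
def boxI {d : ℕ} (x : V d) (r : ℕ) : Set (V d) := {y | ∀ i, (y i - x i).natAbs ≤ r}

/-- Inner vertex boundary of `boxI x r`. -/
def bdryI {d : ℕ} (x : V d) (r : ℕ) : Set (V d) :=
  {y | y ∈ boxI x r ∧ ∃ z, z ∉ boxI x r ∧ adj y z}

/-- The scales `L_n = ℓ₀^n L₀`. -/
def Lsc (ℓ₀ L₀ n : ℕ) : ℕ := ℓ₀ ^ n * L₀

/-- The renormalised lattice `𝕃_n = (2L_n+1)ℤ^d`. -/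
def latt (d ℓ₀ L₀ n : ℕ) : Set (V d) := {x | ∀ i, ((2 * Lsc ℓ₀ L₀ n + 1 : ℕ) : ℤ) ∣ x i}

/-- The `ℓ∞`-distance between the sets `A` and `B` is at least `r`. -/
def setDistGE {d : ℕ} (A B : Set (V d)) (r : ℕ) : Prop := ∀ a ∈ A, ∀ b ∈ B, r ≤ dinf a b

/-- `Σ_n` centered at `x₀` (with `⌊8.5 κ L_n⌋ = 17 κ L_n / 2`). -/
def SgAt (d ℓ₀ L₀ κ : ℕ) (n : ℕ) (x₀ : V d) : Set (V d) :=
  boxI x₀ (9 * κ * Lsc ℓ₀ L₀ n) \ boxI x₀ (17 * κ * Lsc ℓ₀ L₀ n / 2)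

/-- `Λ_n` centered at `x₀`; `annulus` selects which of the two admissible choices is used. -/
def LamAt (d ℓ₀ L₀ κ : ℕ) (annulus : Bool) (n : ℕ) (x₀ : V d) : Set (V d) :=
  if annulus then boxI x₀ (10 * κ * Lsc ℓ₀ L₀ n) \ boxI x₀ (κ * Lsc ℓ₀ L₀ n)
  else boxI x₀ (10 * κ * Lsc ℓ₀ L₀ n)

/-- Definition 2.1: a bridge between `S₁` and `S₂` inside `Sg`, encoded as the finite set of
pairs `(m, x)` labelling the `m`-boxes `B_{L_m}(x)` constituting it. -/
structure IsBridge (d ℓ₀ L₀ κ K : ℕ) (n : ℕ) (Sg S₁ S₂ : Set (V d))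
    (ℬ : Finset (ℕ × V d)) : Prop where
  /-- B1: each element is an `m`-box, `0 ≤ m ≤ n`, included in `Sg`. -/
  boxes : ∀ b ∈ ℬ, b.1 ≤ n ∧ b.2 ∈ latt d ℓ₀ L₀ b.1 ∧ boxI b.2 (Lsc ℓ₀ L₀ b.1) ⊆ Sg
  /-- B1: the union of the boxes is connected. -/
  conn : IsConnSet (⋃ b ∈ ℬ, boxI b.2 (Lsc ℓ₀ L₀ b.1))
  /-- B2. -/
  ends : ∃ b₁ ∈ ℬ, ∃ b₂ ∈ ℬ, b₁.1 = 0 ∧ b₂.1 = 0 ∧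
    (boxI b₁.2 (Lsc ℓ₀ L₀ 0) ∩ S₁).Nonempty ∧ (boxI b₂.2 (Lsc ℓ₀ L₀ 0) ∩ S₂).Nonempty ∧
    ∀ b ∈ ℬ, b ≠ b₁ → b ≠ b₂ → boxI b.2 (Lsc ℓ₀ L₀ b.1) ∩ (S₁ ∪ S₂) = ∅
  /-- B3. -/
  far : ∀ b ∈ ℬ, 1 ≤ b.1 →
    setDistGE (boxI b.2 (Lsc ℓ₀ L₀ b.1)) (S₁ ∪ S₂) (κ * Lsc ℓ₀ L₀ b.1)
  /-- B4. -/
  count : ∀ m : ℕ, (ℬ.filter fun b => b.1 = m).card ≤ 2 * K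

/-- Definition 2.2 (conditions G1 and G2): the collection of boxes `ℬ` is good. -/
def GoodCol {Ω : Type*} (d ℓ₀ L₀ : ℕ) (F : V d → Set Ω) (H : ℕ → V d → Set Ω)
    (ℬ : Finset (ℕ × V d)) (ω : Ω) : Prop :=
  (∀ b ∈ ℬ, b.1 = 0 → ω ∈ F b.2) ∧
    ∀ b ∈ ℬ, ∀ j : ℕ, max b.1 1 ≤ j →
      ∀ y ∈ latt d ℓ₀ L₀ j, b.2 ∈ boxI y (Lsc ℓ₀ L₀ j) → ω ∈ H j y

/-- A set `S` is admissible (relative to the center `x₀` and scale `n`). -/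
def AdmissibleAt (d ℓ₀ L₀ κ : ℕ) (n : ℕ) (x₀ : V d) (S : Set (V d)) : Prop :=
  (∀ x ∈ S, (comp S x ∩ bdryI x₀ (10 * κ * Lsc ℓ₀ L₀ n)).Nonempty) ∧
    ∃ x ∈ S, (comp S x ∩ boxI x₀ (8 * κ * Lsc ℓ₀ L₀ n)).Nonempty

/-- The event `𝒢_{n,x₀}`: between every pair of admissible sets there is a good bridge
inside `x₀ + Σ_n`. -/
def GEvent {Ω : Type*} (d ℓ₀ L₀ κ K : ℕ) (F : V d → Set Ω) (H : ℕ → V d → Set Ω)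
    (annulus : Bool) (n : ℕ) (x₀ : V d) : Set Ω :=
  {ω | ∀ S₁ S₂ : Set (V d),
    S₁ ⊆ LamAt d ℓ₀ L₀ κ annulus n x₀ → S₂ ⊆ LamAt d ℓ₀ L₀ κ annulus n x₀ →
    AdmissibleAt d ℓ₀ L₀ κ n x₀ S₁ → AdmissibleAt d ℓ₀ L₀ κ n x₀ S₂ →
    ∃ ℬ : Finset (ℕ × V d),
      IsBridge d ℓ₀ L₀ κ K n (SgAt d ℓ₀ L₀ κ n x₀) S₁ S₂ ℬ ∧
        GoodCol d ℓ₀ L₀ F H ℬ ω}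

/-- Condition C1: the families `F, H₁, H₂, …` are mutually independent. -/
def CondC1 {Ω : Type*} [MeasurableSpace Ω] (d ℓ₀ L₀ : ℕ) (P : Measure Ω)
    (F : V d → Set Ω) (H : ℕ → V d → Set Ω) : Prop :=
  iIndep (fun n : ℕ => MeasurableSpace.generateFrom
    (if n = 0 then {A | ∃ x ∈ latt d ℓ₀ L₀ 0, A = F x}
     else {A | ∃ x ∈ latt d ℓ₀ L₀ n, A = H n x})) P

/-- Condition C2: events indexed by `κ/2`-separated points are independent. -/
def CondC2 {Ω : Type*} [MeasurableSpace Ω] (d ℓ₀ L₀ κ : ℕ) (P : Measure Ω)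
    (F : V d → Set Ω) (H : ℕ → V d → Set Ω) : Prop :=
  ∀ U : Finset (V d), (∀ u ∈ U, ∀ v ∈ U, u ≠ v → κ ≤ 2 * dinf u v) →
    iIndepSet (fun u : U => F fun i => (2 * (Lsc ℓ₀ L₀ 0 : ℤ) + 1) * u.1 i) P ∧
      ∀ n : ℕ, 1 ≤ n →
        iIndepSet (fun u : U => H n fun i => (2 * (Lsc ℓ₀ L₀ n : ℤ) + 1) * u.1 i) P

/-!
The shell `Σ_{n+1}` contains two bands of `n`-boxes that are far apart from each other. Call a
point bad at level `n + 1` if a seed (one of the events `F`, `H_m`) of that level fails near it,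
or if both bands around it contain a point that is bad at level `n`.

If a point is not bad, one of its bands is clean. If no box of this band is close to both `S₁` and
`S₂`, a path of `n`-boxes in the band runs from the vicinity of `S₁` to the vicinity of `S₂` while
staying away from both, and its ends are attached to `S₁` and `S₂` by half-bridges found
recursively around points of the band that are not bad at level `n`. If some box is close to both
sets, a bridge of level `n` around it is already the bridge sought.

Unfolding the recursion, two bad points in opposite bands are bad because of seeds that are
mutually distant, hence independent by (C1) and (C2). So the probability `p_n` of being bad
satisfies `p_{n+1} ≤ M c 2^{-2^{n+1}} + (M p_n)²` and decays doubly exponentially; the seeds of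
level above `n` that enter (G2) are controlled by a union bound.
-/

section Reachability

variable {α : Type*} {r : α → α → Prop} {X Y : Set α} {N N₁ N₂ : α → Prop} {a b c : α}

/-- `b` can be reached from `a` along an `r`-path all of whose vertices lie in `X`. It is used with
nearest-neighbour adjacency and with adjacency of boxes of a renormalised lattice. -/
def ReachIn (r : α → α → Prop) (X : Set α) (a b : α) : Prop :=
  a ∈ X ∧ Relation.ReflTransGen (fun u v => r u v ∧ u ∈ X ∧ v ∈ X) a b

/-- The vertices of `X` that can be reached from `a` inside `X`. -/
def cluster (r : α → α → Prop) (X : Set α) (a : α) : Set α := {b | ReachIn r X a b}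

namespace ReachIn

lemma refl (ha : a ∈ X) : ReachIn r X a a := ⟨ha, .refl⟩

lemma single (ha : a ∈ X) (hb : b ∈ X) (hab : r a b) : ReachIn r X a b :=
  ⟨ha, .single ⟨hab, ha, hb⟩⟩

lemma trans (hab : ReachIn r X a b) (hbc : ReachIn r X b c) : ReachIn r X a c :=
  ⟨hab.1, hab.2.trans hbc.2⟩

lemma right_mem (h : ReachIn r X a b) : b ∈ X := by
  rcases h.2.cases_tail with rfl | ⟨_, _, h'⟩
  exacts [h.1, h'.2.2]

lemma symm [Std.Symm r] (h : ReachIn r X a b) : ReachIn r X b a :=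
  ⟨h.right_mem, Relation.ReflTransGen.mono
    (fun _ _ huv => ⟨symm_of r huv.1, huv.2.2, huv.2.1⟩) _ _ h.2.swap⟩

lemma mono (hXY : X ⊆ Y) (h : ReachIn r X a b) : ReachIn r Y a b :=
  ⟨hXY h.1, Relation.ReflTransGen.mono (fun _ _ huv => ⟨huv.1, hXY huv.2.1, hXY huv.2.2⟩) _ _ h.2⟩

@[elab_as_elim]
lemma induction_on {p : α → Prop} (h : ReachIn r X a b) (base : p a)
    (step : ∀ u v, ReachIn r X a u → v ∈ X → r u v → p u → p v) : p b := by
  obtain ⟨ha, hab⟩ := h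
  induction hab with
  | refl => exact base
  | @tail u v hau huv ih => exact step u v ⟨ha, hau⟩ huv.2.2 huv.1 ih

lemma exists_step_into (h : ReachIn r X a b) (ha : ¬ N a) (hb : N b) :
    ∃ u v, ReachIn r (X \ {z | N z}) a u ∧ r u v ∧ v ∈ X ∧ N v := by
  refine (h.induction_on (p := fun z =>
    (∃ u v, ReachIn r (X \ {z | N z}) a u ∧ r u v ∧ v ∈ X ∧ N v) ∨
      ReachIn r (X \ {z | N z}) a z) (.inr (.refl ⟨h.1, ha⟩)) ?_).resolve_right
    fun hab => hab.right_mem.2 hb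
  rintro u v - hv huv (hex | hau)
  · exact .inl hex
  · by_cases hNv : N v
    · exact .inl ⟨u, v, hau, huv, hv, hNv⟩
    · exact .inr (hau.trans (.single hau.right_mem ⟨hv, hNv⟩ huv))

lemma exists_first_hit (h : ReachIn r X a b) (hb : N b) :
    ∃ c, N c ∧ ReachIn r {z ∈ X | N z → z = c} a c := by
  by_cases ha : N a
  · exact ⟨a, ha, .refl ⟨h.1, fun _ => rfl⟩⟩
  · obtain ⟨u, v, hau, huv, hvX, hv⟩ := h.exists_step_into ha hb
    have hau' : ReachIn r {z ∈ X | N z → z = v} a u :=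
      hau.mono fun z hz => ⟨hz.1, fun hNz => absurd hNz hz.2⟩
    exact ⟨v, hv, hau'.trans (.single hau'.right_mem ⟨hvX, fun _ => rfl⟩ huv)⟩

lemma exists_minimal_crossing [Std.Symm r] (h : ReachIn r X a b) (ha : N₁ a) (hb : N₂ b) :
    ∃ u v, N₁ u ∧ N₂ v ∧ ReachIn r {z ∈ X | (N₁ z → z = u) ∧ (N₂ z → z = v)} u v := by
  obtain ⟨v, hv, hav⟩ := h.exists_first_hit hb
  obtain ⟨u, hu, hvu⟩ := hav.symm.exists_first_hit ha
  exact ⟨u, v, hu, hv, hvu.symm.mono fun z hz => ⟨hz.1.1, hz.2, hz.1.2⟩⟩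

lemma of_exists_descent (f : α → ℕ) (hX : ∀ y ∈ X, y ≠ a → ∃ z ∈ X, r y z ∧ f z < f y)
    (hb : b ∈ X) : ReachIn r X b a := by
  induction hn : f b using Nat.strong_induction_on generalizing b with
  | _ n ih =>
    by_cases hba : b = a
    · subst hba
      exact .refl hb
    · obtain ⟨z, hz, hbz, hlt⟩ := hX b hb hba
      exact (ReachIn.single hb hz hbz).trans (ih _ (hn ▸ hlt) hz rfl)

end ReachIn

end Reachability

section Lattice

variable {d : ℕ} {x y z : V d} {S T : Set (V d)}

lemma dinf_le_iff {r : ℕ} : dinf x y ≤ r ↔ ∀ i, (x i - y i).natAbs ≤ r := by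
  simp [dinf, Finset.sup_le_iff]

lemma natAbs_sub_le_dinf (x y : V d) (i : Fin d) : (x i - y i).natAbs ≤ dinf x y :=
  dinf_le_iff.1 le_rfl i

lemma exists_le_natAbs_sub {r : ℕ} (hr : 0 < r) (h : r ≤ dinf x y) :
    ∃ i, r ≤ (x i - y i).natAbs := by
  simpa [dinf, Finset.le_sup_iff (bot_lt_iff_ne_bot.2 hr.ne')] using h

lemma dinf_comm (x y : V d) : dinf x y = dinf y x := by
  simp only [dinf, ← Int.natAbs_neg (x _ - y _), neg_sub]

lemma dinf_self (x : V d) : dinf x x = 0 :=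
  Nat.le_zero.1 (dinf_le_iff.2 fun i => by simp)

lemma dinf_triangle (x y z : V d) : dinf x z ≤ dinf x y + dinf y z :=
  dinf_le_iff.2 fun i => by
    have := natAbs_sub_le_dinf x y i
    have := natAbs_sub_le_dinf y z i
    omega

lemma mem_boxI {r : ℕ} : y ∈ boxI x r ↔ dinf y x ≤ r := dinf_le_iff.symm

lemma self_mem_boxI (x : V d) (r : ℕ) : x ∈ boxI x r := mem_boxI.2 (by simp [dinf_self])

instance : Std.Symm (adj (d := d)) :=
  ⟨fun x y h => by simpa only [adj, ← Int.natAbs_neg (x _ - y _), neg_sub] using h⟩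

lemma dinf_le_one_of_adj (h : adj x y) : dinf x y ≤ 1 := by
  refine dinf_le_iff.2 fun i => ?_
  rw [← h]
  exact Finset.single_le_sum (f := fun i => (x i - y i).natAbs) (fun _ _ => Nat.zero_le _)
    (Finset.mem_univ i)

lemma adj_update_update (i : Fin d) {s t : ℤ} (hst : (s - t).natAbs = 1) :
    adj (Function.update x i s) (Function.update x i t) := by
  rw [adj, Finset.sum_eq_single i] <;> simp +contextual [hst]

lemma sum_natAbs_sub_update_lt (i : Fin d) {t : ℤ}
    (ht : (t - x i).natAbs < (y i - x i).natAbs) :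
    ∑ j, (Function.update y i t j - x j).natAbs < ∑ j, (y j - x j).natAbs := by
  refine Finset.sum_lt_sum (fun j _ => ?_) ⟨i, Finset.mem_univ i, by simpa using ht⟩
  obtain rfl | hj := eq_or_ne j i
  · simpa using ht.le
  · simp [hj]

lemma connIn_iff_reachIn : ConnIn S {x} {y} ↔ ReachIn adj S x y := by
  constructor
  · rintro ⟨n, γ, rfl, rfl, hS, hadj⟩
    have key : ∀ k ≤ n, ReachIn adj S (γ 0) (γ k) := fun k => by
      induction k with
      | zero => exact fun _ => .refl (hS 0 n.zero_le)
      | succ k ih =>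
        exact fun hk => (ih (by omega)).trans (.single (hS k (by omega)) (hS _ hk) (hadj k hk))
    exact key n le_rfl
  · intro h
    refine h.induction_on ⟨0, fun _ => x, rfl, rfl, fun _ _ => h.1, fun k hk => by omega⟩ ?_
    rintro u v - hv huv ⟨n, γ, h0, rfl, hS, hadj⟩
    refine ⟨n + 1, fun k => if k ≤ n then γ k else v, by simpa using h0, by simp,
      fun k _ => ?_, fun k hk => ?_⟩
    · by_cases hk : k ≤ n <;> simp [hk, hS, hv]
    · obtain hk' | rfl := Nat.lt_succ_iff_lt_or_eq.1 hk
      · simpa [hk'.le, Nat.succ_le_of_lt hk'] using hadj k hk'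
      · simpa using huv

lemma isConnSet_iff_reachIn : IsConnSet S ↔ ∀ x ∈ S, ∀ y ∈ S, ReachIn adj S x y := by
  simp only [IsConnSet, connIn_iff_reachIn]

lemma IsConnSet.of_forall_reachIn (h : ∀ y ∈ S, ReachIn adj S y x) : IsConnSet S :=
  isConnSet_iff_reachIn.2 fun y hy z hz => (h y hy).trans (h z hz).symm

lemma IsConnSet.reachIn (h : IsConnSet S) (hx : x ∈ S) (hy : y ∈ S) : ReachIn adj S x y :=
  isConnSet_iff_reachIn.1 h x hx y hy

lemma IsConnSet.union (hS : IsConnSet S) (hT : IsConnSet T) (h : (S ∩ T).Nonempty) :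
    IsConnSet (S ∪ T) := by
  obtain ⟨c, hcS, hcT⟩ := h
  refine .of_forall_reachIn (x := c) ?_
  rintro y (hy | hy)
  · exact (hS.reachIn hy hcS).mono subset_union_left
  · exact (hT.reachIn hy hcT).mono subset_union_right

lemma ReachIn.exists_dinf_eq {a b : V d} {r : ℕ} (h : ReachIn adj S a b) (ha : dinf a x ≤ r)
    (hb : r ≤ dinf b x) : ∃ c ∈ S, dinf c x = r := by
  by_contra! hne
  refine (h.induction_on (p := fun z => dinf z x < r) (ha.lt_of_ne (hne a h.1)) ?_).not_ge hb
  intro u v _ hv huv hu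
  have := dinf_le_one_of_adj (symm_of adj huv)
  have := dinf_triangle v u x
  have := hne v hv
  omega

lemma isConnSet_boxI (x : V d) (r : ℕ) : IsConnSet (boxI x r) := by
  refine .of_forall_reachIn (x := x) fun y hy =>
    .of_exists_descent (fun y => ∑ i, (y i - x i).natAbs) (fun y hy hyx => ?_) hy
  obtain ⟨i, hi⟩ := Function.ne_iff.1 hyx
  obtain ⟨t, hyt, hlt⟩ : ∃ t, (y i - t).natAbs = 1 ∧ (t - x i).natAbs < (y i - x i).natAbs := by
    obtain h | h := lt_or_gt_of_ne hi
    · exact ⟨y i + 1, by omega, by omega⟩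
    · exact ⟨y i - 1, by omega, by omega⟩
  refine ⟨Function.update y i t, fun j => ?_, ?_, sum_natAbs_sub_update_lt i hlt⟩
  · obtain rfl | hj := eq_or_ne j i
    · simpa using hlt.le.trans (hy j)
    · simpa [hj] using hy j
  · simpa using adj_update_update (x := y) i hyt

end Lattice

section CoarseLattice

variable {d L a b r : ℕ} {x y z p : V d} {P S : Set (V d)}

/-- The lattice `(2L+1)ℤ^d` of centres of the boxes of radius `L` tiling `ℤ^d`; for `L = L_n` it
is `𝕃_n`. -/
def coarseLattice (d L : ℕ) : Set (V d) := {x | ∀ i, ((2 * L + 1 : ℕ) : ℤ) ∣ x i}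

/-- Adjacency of `(2L+1)ℤ^d`: the boxes of radius `L` around the two points share a face. -/
def CoarseAdj (L : ℕ) (y z : V d) : Prop :=
  ∃ i, z = Function.update y i (y i + (2 * L + 1 : ℕ)) ∨
    y = Function.update z i (z i + (2 * L + 1 : ℕ))

/-- The union of the boxes of radius `L` centred at the points of `P`. -/
def boxUnion (L : ℕ) (P : Set (V d)) : Set (V d) := ⋃ z ∈ P, boxI z L

/-- The points of `(2L+1)ℤ^d` at distance between `a` and `b` from `x`. -/
def coarseAnnulus (L : ℕ) (x : V d) (a b : ℕ) : Set (V d) :=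
  {z ∈ coarseLattice d L | a ≤ dinf z x ∧ dinf z x ≤ b}

/-- The points of `(2L+1)ℤ^d` at distance at most `r` from `x`, as a finite set. -/
def coarseBall (L : ℕ) (x : V d) (r : ℕ) : Finset (V d) :=
  Fintype.piFinset fun i => {t ∈ Finset.Ioc (x i - r - 1) (x i + r) | ((2 * L + 1 : ℕ) : ℤ) ∣ t}

lemma mem_boxUnion : p ∈ boxUnion L P ↔ ∃ z ∈ P, p ∈ boxI z L := by
  simp [boxUnion]

lemma boxI_subset_boxUnion (hz : z ∈ P) : boxI z L ⊆ boxUnion L P :=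
  subset_biUnion_of_mem (u := fun z => boxI z L) hz

lemma mem_coarseBall : z ∈ coarseBall L x r ↔ z ∈ coarseLattice d L ∧ dinf z x ≤ r := by
  simp only [coarseBall, Fintype.mem_piFinset, Finset.mem_filter, Finset.mem_Ioc, forall_and,
    coarseLattice, mem_ofPred_eq, dinf_le_iff]
  rw [and_comm, ← forall_and]
  exact and_congr_right fun _ => forall_congr' fun i => by omega

lemma card_filter_dvd_Ioc_le (L R : ℕ) (t : ℤ) :
    {u ∈ Finset.Ioc (t - (R * L : ℕ) - 1) (t + (R * L : ℕ)) | ((2 * L + 1 : ℕ) : ℤ) ∣ u}.card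
      ≤ R + 1 := by
  zify
  rw [Int.Ioc_filter_dvd_card _ _ (by omega), max_le_iff, sub_le_iff_le_add']
  refine ⟨?_, by positivity⟩
  have hle : ((t + (R * L : ℕ) : ℤ) : ℚ) / ((2 * L + 1 : ℕ) : ℤ) ≤
      ((t - (R * L : ℕ) - 1 : ℤ) : ℚ) / ((2 * L + 1 : ℕ) : ℤ) + (R + 1 : ℤ) := by
    have hs : (0 : ℚ) < 2 * L + 1 := by positivity
    push_cast
    rw [div_add' _ _ _ hs.ne', div_le_div_iff_of_pos_right hs]
    nlinarith [Nat.cast_nonneg (α := ℚ) R, Nat.cast_nonneg (α := ℚ) L]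
  exact (Int.floor_mono hle).trans_eq (Int.floor_add_intCast _ _)

lemma card_coarseBall_le (L R : ℕ) (x : V d) : (coarseBall L x (R * L)).card ≤ (R + 1) ^ d := by
  rw [coarseBall, Fintype.card_piFinset]
  exact (Finset.prod_le_pow_card _ _ (R + 1) fun i _ => card_filter_dvd_Ioc_le L R (x i)).trans_eq
    (by simp)

instance : Std.Symm (CoarseAdj (d := d) L) :=
  ⟨fun _ _ ⟨i, h⟩ => ⟨i, h.symm⟩⟩

lemma dinf_le_of_coarseAdj (h : CoarseAdj L y z) : dinf y z ≤ 2 * L + 1 := by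
  have key (y : V d) (i : Fin d) :
      dinf (Function.update y i (y i + (2 * L + 1 : ℕ))) y ≤ 2 * L + 1 :=
    dinf_le_iff.2 fun j => by
      obtain rfl | hj := eq_or_ne j i
      · rw [Function.update_self, add_sub_cancel_left, Int.natAbs_natCast]
      · simp [hj]
  obtain ⟨i, rfl | rfl⟩ := h
  · exact dinf_comm y _ ▸ key y i
  · exact key z i

lemma exists_mem_coarseLattice_mem_boxI (L : ℕ) (p : V d) :
    ∃ z ∈ coarseLattice d L, p ∈ boxI z L := by
  set s : ℤ := ((2 * L + 1 : ℕ) : ℤ)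
  refine ⟨fun i => s * ((p i + L) / s), fun i => dvd_mul_right _ _, fun i => ?_⟩
  have := Int.mul_ediv_self_le (x := p i + L) (k := s) (by omega)
  have := Int.lt_mul_ediv_self_add (x := p i + L) (k := s) (by omega)
  dsimp only
  omega

lemma exists_mem_coarseLattice_between (L : ℕ) (h : dinf x y ≤ 2 * r) :
    ∃ z ∈ coarseLattice d L, dinf x z ≤ r + L + 1 ∧ dinf y z ≤ r + L + 1 := by
  let m : V d := fun i => (x i + y i) / 2
  have hx : dinf x m ≤ r + 1 := dinf_le_iff.2 fun i => by
    have := dinf_le_iff.1 h i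
    simp only [m]
    omega
  have hy : dinf y m ≤ r + 1 := dinf_le_iff.2 fun i => by
    have := dinf_le_iff.1 h i
    simp only [m]
    omega
  obtain ⟨z, hz, hm⟩ := exists_mem_coarseLattice_mem_boxI L m
  rw [mem_boxI] at hm
  have := dinf_triangle x m z
  have := dinf_triangle y m z
  exact ⟨z, hz, by omega, by omega⟩

lemma reachIn_boxI_union_of_coarseAdj (h : CoarseAdj L y z) :
    ReachIn adj (boxI y L ∪ boxI z L) y z := by
  have key (y : V d) (i : Fin d) :
      ReachIn adj (boxI y L ∪ boxI (Function.update y i (y i + (2 * L + 1 : ℕ))) L) y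
        (Function.update y i (y i + (2 * L + 1 : ℕ))) := by
    set z := Function.update y i (y i + (2 * L + 1 : ℕ)) with hz
    have hu : Function.update y i (y i + L) ∈ boxI y L := fun j => by
      obtain rfl | hj := eq_or_ne j i <;> simp [*]
    have hv : Function.update y i (y i + L + 1) ∈ boxI z L := fun j => by
      obtain rfl | hj := eq_or_ne j i
      · simp only [hz, Function.update_self]
        omega
      · simp [hz, hj]
    exact (((isConnSet_boxI y L).reachIn (self_mem_boxI y L) hu).mono subset_union_left).trans <|
      (ReachIn.single (.inl hu) (.inr hv) (adj_update_update i (by omega))).trans <|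
        ((isConnSet_boxI z L).reachIn hv (self_mem_boxI z L)).mono subset_union_right
  obtain ⟨i, rfl | rfl⟩ := h
  · exact key y i
  · rw [union_comm]
    exact (key z i).symm

lemma isConnSet_boxUnion_cluster (L : ℕ) (P : Set (V d)) (w : V d) :
    IsConnSet (boxUnion L (cluster (CoarseAdj L) P w)) := by
  refine .of_forall_reachIn (x := w) fun p hp => ?_
  obtain ⟨z, hz, hpz⟩ := mem_boxUnion.1 hp
  refine (((isConnSet_boxI z L).reachIn hpz (self_mem_boxI z L)).mono
    (boxI_subset_boxUnion hz)).trans (ReachIn.symm ?_)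
  refine ReachIn.induction_on hz (.refl (boxI_subset_boxUnion (.refl hz.1) (self_mem_boxI w L))) ?_
  intro u v hu hv huv hwu
  have hwv : ReachIn (CoarseAdj L) P w v := hu.trans (.single hu.right_mem hv huv)
  exact hwu.trans <| (reachIn_boxI_union_of_coarseAdj huv).mono <|
    union_subset (boxI_subset_boxUnion hu) (boxI_subset_boxUnion hwv)

lemma exists_mem_coarseAnnulus_inter_nonempty (L : ℕ) {u v : V d} (huv : ReachIn adj S u v)
    (hu : dinf u x ≤ a + L) (hv : a + L ≤ dinf v x) (hab : a + 2 * L ≤ b) :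
    ∃ z ∈ coarseAnnulus L x a b, (boxI z L ∩ S).Nonempty := by
  obtain ⟨c, hc, hcx⟩ := huv.exists_dinf_eq hu hv
  obtain ⟨z, hz, hcz⟩ := exists_mem_coarseLattice_mem_boxI L c
  have := mem_boxI.1 hcz
  have := dinf_triangle z c x
  have := dinf_triangle c z x
  have := dinf_comm c z
  exact ⟨z, ⟨hz, by omega, by omega⟩, c, hcz, hc⟩

/-- The largest point of `(2L+1)ℤ^d` that is coordinatewise at most `x + b`. -/
def topCorner (L : ℕ) (x : V d) (b : ℕ) : V d :=
  fun i => (2 * L + 1 : ℕ) * ((x i + b) / (2 * L + 1 : ℕ))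

lemma topCorner_le (L : ℕ) (x : V d) (b : ℕ) (i : Fin d) : topCorner L x b i ≤ x i + b :=
  Int.mul_ediv_self_le (by omega)

lemma lt_topCorner_add (L : ℕ) (x : V d) (b : ℕ) (i : Fin d) :
    x i + b < topCorner L x b i + (2 * L + 1 : ℕ) :=
  Int.lt_mul_ediv_self_add (by omega)

lemma le_topCorner (hz : z ∈ coarseAnnulus L x a b) (i : Fin d) : z i ≤ topCorner L x b i := by
  obtain ⟨t, ht⟩ := hz.1 i
  have hzx := dinf_le_iff.1 hz.2.2 i
  rw [ht, topCorner]
  refine mul_le_mul_of_nonneg_left ?_ (by omega)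
  rw [Int.le_ediv_iff_mul_le (by omega), mul_comm, ← ht]
  omega

lemma add_le_topCorner (hz : z ∈ coarseAnnulus L x a b) {i : Fin d}
    (hi : z i ≠ topCorner L x b i) : z i + (2 * L + 1 : ℕ) ≤ topCorner L x b i := by
  have hlt := (le_topCorner hz i).lt_of_ne hi
  have hdvd : ((2 * L + 1 : ℕ) : ℤ) ∣ topCorner L x b i - z i :=
    dvd_sub (dvd_mul_right _ _) (hz.1 i)
  have := Int.le_of_dvd (by omega) hdvd
  omega

-- A second coordinate can carry the distance to `x` while the first one is being raised.
lemma exists_coordinate_to_raise (hd : 2 ≤ d) (ha : 0 < a) (hab : a + 2 * L + 1 ≤ b)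
    (hz : z ∈ coarseAnnulus L x a b) (hne : z ≠ topCorner L x b) :
    ∃ i j, j ≠ i ∧ a ≤ (z i - x i).natAbs ∧ z j ≠ topCorner L x b j := by
  obtain ⟨i, hi⟩ := exists_le_natAbs_sub ha hz.2.1
  by_cases h : ∃ j, j ≠ i ∧ z j ≠ topCorner L x b j
  · obtain ⟨j, hji, hj⟩ := h
    exact ⟨i, j, hji, hi, hj⟩
  · push Not at h
    have : Nontrivial (Fin d) := Fin.nontrivial_iff_two_le.2 hd
    obtain ⟨j, hji⟩ := exists_ne i
    have hzi : z i ≠ topCorner L x b i := fun hzi => hne <| funext fun k => by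
      obtain rfl | hk := eq_or_ne k i
      exacts [hzi, h k hk]
    have hzj := h j hji
    have := lt_topCorner_add L x b j
    exact ⟨j, i, hji.symm, by omega, hzi⟩

lemma reachIn_coarseAnnulus_topCorner (hd : 2 ≤ d) (ha : 0 < a) (hab : a + 2 * L + 1 ≤ b)
    (hz : z ∈ coarseAnnulus L x a b) :
    ReachIn (CoarseAdj L) (coarseAnnulus L x a b) z (topCorner L x b) := by
  refine .of_exists_descent (fun y => ∑ i, (y i - topCorner L x b i).natAbs)
    (fun y hy hne => ?_) hz
  obtain ⟨i, j, hji, hi, hj⟩ := exists_coordinate_to_raise hd ha hab hy hne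
  have hstep := add_le_topCorner hy hj
  have hcorner := topCorner_le L x b j
  refine ⟨Function.update y j (y j + (2 * L + 1 : ℕ)), ⟨fun k => ?_, ?_, dinf_le_iff.2 fun k => ?_⟩,
    ⟨j, .inl rfl⟩, sum_natAbs_sub_update_lt j (by omega)⟩
  · obtain rfl | hk := eq_or_ne k j
    · simpa using hy.1 k
    · simpa [hk] using hy.1 k
  · refine hi.trans ?_
    simpa [hji.symm] using natAbs_sub_le_dinf (Function.update y j (y j + (2 * L + 1 : ℕ))) x i
  · have hk := dinf_le_iff.1 hy.2.2 k
    obtain rfl | hkj := eq_or_ne k j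
    · rw [Function.update_self]
      omega
    · simpa [hkj] using hk

lemma reachIn_coarseAnnulus (hd : 2 ≤ d) (ha : 0 < a) (hab : a + 2 * L + 1 ≤ b)
    (hy : y ∈ coarseAnnulus L x a b) (hz : z ∈ coarseAnnulus L x a b) :
    ReachIn (CoarseAdj L) (coarseAnnulus L x a b) y z :=
  (reachIn_coarseAnnulus_topCorner hd ha hab hy).trans
    (reachIn_coarseAnnulus_topCorner hd ha hab hz).symm

end CoarseLattice

/-- The numerical parameters `ℓ₀`, `L₀`, `κ` of the renormalisation scheme. -/
structure Scales where
  ℓ₀ : ℕ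
  L₀ : ℕ
  κ : ℕ
  le_ℓ₀ : 1000 ≤ ℓ₀
  one_le_L₀ : 1 ≤ L₀
  le_κ : 20 ≤ κ

namespace Scales

variable {d : ℕ} (σ : Scales)

/-- The radius `L_n` of the `n`-boxes. -/
def len (n : ℕ) : ℕ := Lsc σ.ℓ₀ σ.L₀ n

/-- The unit `κ L_n` in which the radii at scale `n` are measured. -/
def unit (n : ℕ) : ℕ := σ.κ * σ.len n

/-- A bound for the number of `n`-boxes in the shell `Σ_{n+1}`. -/
def maxBoxes (d : ℕ) : ℕ := (9 * σ.κ * σ.ℓ₀ + 1) ^ d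

/-- The shell `Σ_n` around `x`. -/
def shell (n : ℕ) (x : V d) : Set (V d) :=
  {p | 17 * σ.unit n / 2 < dinf p x ∧ dinf p x ≤ 9 * σ.unit n}

/-- `S` crosses the annulus between the radii `8 κ L_n` and `10 κ L_n` around `x`, and each of its
components leaves the larger box. All that is used of an admissible set is that it crosses. -/
structure Crosses (n : ℕ) (x : V d) (S : Set (V d)) : Prop where
  exists_far : ∀ s ∈ S, ∃ t, ReachIn adj S s t ∧ 10 * σ.unit n ≤ dinf t x
  exists_close : ∃ s ∈ S, dinf s x ≤ 8 * σ.unit n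

lemma len_pos (n : ℕ) : 0 < σ.len n :=
  Nat.mul_pos (pow_pos (by linarith [σ.le_ℓ₀]) n) σ.one_le_L₀

lemma len_le_unit (n : ℕ) : 20 * σ.len n ≤ σ.unit n := Nat.mul_le_mul_right _ σ.le_κ

lemma unit_succ (n : ℕ) : σ.unit (n + 1) = σ.ℓ₀ * σ.unit n := by
  simp only [unit, len, Lsc]
  ring

lemma unit_le_unit_succ (n : ℕ) : 1000 * σ.unit n ≤ σ.unit (n + 1) :=
  (Nat.mul_le_mul_right _ σ.le_ℓ₀).trans_eq (σ.unit_succ n).symm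

lemma unit_mono : Monotone σ.unit :=
  monotone_nat_of_le_succ fun n => by linarith [σ.unit_le_unit_succ n]

lemma hundred_le_maxBoxes (hd : d ≠ 0) : 100 ≤ σ.maxBoxes d := by
  have h : 100 ≤ 9 * σ.κ * σ.ℓ₀ + 1 := by nlinarith [σ.le_κ, σ.le_ℓ₀]
  exact h.trans (Nat.le_self_pow hd _)

lemma card_coarseBall_le_maxBoxes (n : ℕ) (x : V d) {r : ℕ} (hr : r ≤ 9 * σ.unit (n + 1)) :
    (coarseBall (σ.len n) x r).card ≤ σ.maxBoxes d := by
  have hunit : 9 * σ.unit (n + 1) = 9 * σ.κ * σ.ℓ₀ * σ.len n := by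
    rw [unit_succ, unit]
    ring
  refine (Finset.card_le_card fun z hz => ?_).trans (card_coarseBall_le (σ.len n) _ x)
  rw [mem_coarseBall] at hz ⊢
  exact ⟨hz.1, hz.2.trans (hr.trans_eq hunit)⟩

variable {σ} {n a b : ℕ} {x y : V d} {S T U : Set (V d)}

lemma Crosses.exists_mem_coarseAnnulus (hS : σ.Crosses n x S) (L : ℕ) (ha : 8 * σ.unit n ≤ a + L)
    (ha' : a + L ≤ 10 * σ.unit n) (hab : a + 2 * L ≤ b) :
    ∃ z ∈ coarseAnnulus L x a b, (boxI z L ∩ S).Nonempty := by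
  obtain ⟨s, hs, hsx⟩ := hS.exists_close
  obtain ⟨t, hst, htx⟩ := hS.exists_far s hs
  exact exists_mem_coarseAnnulus_inter_nonempty L hst (hsx.trans ha) (ha'.trans htx) hab

lemma Crosses.descend {s : V d} (hS : σ.Crosses (n + 1) x S) (hs : s ∈ S)
    (hsy : dinf s y ≤ 8 * σ.unit n) (hyx : dinf y x + 10 * σ.unit n ≤ 9 * σ.unit (n + 1)) :
    σ.Crosses n y S := by
  refine ⟨fun s hs => ?_, s, hs, hsy⟩
  obtain ⟨t, hst, htx⟩ := hS.exists_far s hs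
  have := dinf_triangle t y x
  exact ⟨t, hst, by omega⟩

lemma Crosses.descend_union (hT : σ.Crosses (n + 1) x T) (hU : IsConnSet U)
    (hTU : (U ∩ T).Nonempty) (hyU : y ∈ U)
    (hyx : dinf y x + 10 * σ.unit n ≤ 9 * σ.unit (n + 1)) : σ.Crosses n y (T ∪ U) := by
  have far_of_mem (t : V d) (ht : t ∈ T) :
      ∃ t', ReachIn adj (T ∪ U) t t' ∧ 10 * σ.unit n ≤ dinf t' y := by
    obtain ⟨t', htt', ht'⟩ := hT.exists_far t ht
    have := dinf_triangle t' y x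
    exact ⟨t', htt'.mono subset_union_left, by omega⟩
  refine ⟨?_, y, .inr hyU, by simp [dinf_self]⟩
  rintro u (hu | hu)
  · exact far_of_mem u hu
  · obtain ⟨c, hcU, hcT⟩ := hTU
    obtain ⟨t', hct', ht'⟩ := far_of_mem c hcT
    exact ⟨t', ((hU.reachIn hu hcU).mono subset_union_right).trans hct', ht'⟩

lemma crosses_of_isConnSet {z : V d} (hU : IsConnSet U) (hy : y ∈ U) (hz : z ∈ U)
    (hzy : 10 * σ.unit n ≤ dinf z y) : σ.Crosses n y U :=
  ⟨fun _ hu => ⟨z, hU.reachIn hu hz, hzy⟩, y, hy, by simp [dinf_self]⟩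

end Scales

section BadPoints

variable {d : ℕ} (σ : Scales) (G : ℕ → V d → Prop)

/-- Some seed of level `n` near `x` fails. Here `G m z` says that the seed of the `m`-box at `z`
(the event `F_{0,z}` if `m = 0`, and `H_{m,z}` otherwise) occurs. -/
def HasBadSeed (n : ℕ) (x : V d) : Prop :=
  ∃ z ∈ coarseBall (σ.len n) x (10 * σ.unit n), ¬ G n z

/-- The inner radius of the inner one of the two bands of `n`-boxes in the shell `Σ_{n+1}`. -/
def innerBand (n : ℕ) : ℕ := 17 * σ.unit (n + 1) / 2 + 10 * σ.unit n

/-- The inner radius of the outer one of the two bands of `n`-boxes in the shell `Σ_{n+1}`. -/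
def outerBand (n : ℕ) : ℕ := 17 * σ.unit (n + 1) / 2 + 210 * σ.unit n

/-- The band of centres of `n`-boxes at distance between `ρ` and `ρ + 100 κ L_n` from `x`. -/
def band (n : ℕ) (x : V d) (ρ : ℕ) : Set (V d) :=
  coarseAnnulus (σ.len n) x ρ (ρ + 100 * σ.unit n)

/-- The failure of the multiscale construction: a point is bad at level `n + 1` if it has a bad
seed nearby, or if both bands of its shell contain points that are bad at level `n`. -/
def Bad : ℕ → V d → Prop
  | 0, x => HasBadSeed σ G 0 x
  | n + 1, x => HasBadSeed σ G (n + 1) x ∨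
      ∃ z₁ ∈ band σ n x (innerBand σ n), ∃ z₂ ∈ band σ n x (outerBand σ n), Bad n z₁ ∧ Bad n z₂

/-- The seeds of all boxes of level at most `n` containing the box `b` occur. The pair `b = (m, z)`
stands for the `m`-box centred at `z`. -/
def IsGoodBox (n : ℕ) (b : ℕ × V d) : Prop :=
  ∀ j, b.1 ≤ j → j ≤ n → ∀ y ∈ coarseLattice d (σ.len j), b.2 ∈ boxI y (σ.len j) → G j y

/-- A band of `Σ_{n+1}` without bad points, which stays away from the boundary of the shell. -/
structure IsCleanBand (n : ℕ) (x : V d) (ρ : ℕ) : Prop where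
  le_radius : 17 * σ.unit (n + 1) / 2 + 10 * σ.unit n ≤ ρ
  radius_le : ρ + 110 * σ.unit n ≤ 9 * σ.unit (n + 1)
  not_bad : ∀ z ∈ band σ n x ρ, ¬ Bad σ G n z

/-- The middle part of a band, along which the paths of boxes are chosen. -/
def track (n : ℕ) (x : V d) (ρ : ℕ) : Set (V d) :=
  coarseAnnulus (σ.len n) x (ρ + 20 * σ.unit n) (ρ + 80 * σ.unit n)

variable {σ G} {n ρ : ℕ} {x y z : V d} {S : Set (V d)}

lemma Bad.of_hasBadSeed (h : HasBadSeed σ G n x) : Bad σ G n x := by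
  cases n with
  | zero => exact h
  | succ n => exact .inl h

lemma seed_of_not_hasBadSeed (hx : ¬ HasBadSeed σ G n x) (hy : y ∈ coarseLattice d (σ.len n))
    (hzy : z ∈ boxI y (σ.len n)) (hzx : dinf z x ≤ 9 * σ.unit n) : G n y := by
  by_contra hG
  have := mem_boxI.1 hzy
  have := dinf_comm z y
  have := dinf_triangle y z x
  have := σ.len_le_unit n
  exact hx ⟨y, mem_coarseBall.2 ⟨hy, by omega⟩, hG⟩

lemma isGoodBox_self (hx : ¬ Bad σ G n x) (hz : dinf z x ≤ 9 * σ.unit n) :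
    IsGoodBox σ G n (n, z) := fun j hnj hjn y hy hzy => by
  obtain rfl : j = n := le_antisymm hjn hnj
  exact seed_of_not_hasBadSeed (mt Bad.of_hasBadSeed hx) hy hzy hz

lemma IsGoodBox.lift {b : ℕ × V d} (hb : IsGoodBox σ G n b) (hx : ¬ Bad σ G (n + 1) x)
    (hbx : dinf b.2 x ≤ 9 * σ.unit (n + 1)) : IsGoodBox σ G (n + 1) b :=
  fun j hbj hj y hy hby => by
    obtain hj | rfl := Nat.le_succ_iff.1 hj
    · exact hb j hbj hj y hy hby
    · exact seed_of_not_hasBadSeed (mt Bad.of_hasBadSeed hx) hy hby hbx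

lemma exists_isCleanBand (hx : ¬ Bad σ G (n + 1) x) : ∃ ρ, IsCleanBand σ G n x ρ := by
  have := σ.unit_le_unit_succ n
  by_contra! hno
  have exists_bad {ρ : ℕ} (h₁ : 17 * σ.unit (n + 1) / 2 + 10 * σ.unit n ≤ ρ)
      (h₂ : ρ + 110 * σ.unit n ≤ 9 * σ.unit (n + 1)) : ∃ z ∈ band σ n x ρ, Bad σ G n z := by
    by_contra! h
    exact hno ρ ⟨h₁, h₂, h⟩
  obtain ⟨z₁, hz₁, hbad₁⟩ := exists_bad (ρ := innerBand σ n) le_rfl (by rw [innerBand]; omega)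
  obtain ⟨z₂, hz₂, hbad₂⟩ :=
    exists_bad (ρ := outerBand σ n) (by rw [outerBand]; omega) (by rw [outerBand]; omega)
  exact hx (.inr ⟨z₁, hz₁, z₂, hz₂, hbad₁, hbad₂⟩)

lemma mem_band_of_dinf_track_le (hz : z ∈ track σ n x ρ) (hy : y ∈ coarseLattice d (σ.len n))
    (hyz : dinf y z ≤ 20 * σ.unit n) : y ∈ band σ n x ρ := by
  have := hz.2
  have := dinf_triangle y z x
  have := dinf_triangle z y x
  have := dinf_comm y z
  exact ⟨hy, by omega, by omega⟩

lemma track_subset_band : track σ n x ρ ⊆ band σ n x ρ := fun _ hz =>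
  mem_band_of_dinf_track_le hz hz.1 (by simp [dinf_self])

lemma IsCleanBand.dinf_add_le (hρ : IsCleanBand σ G n x ρ) (hy : y ∈ band σ n x ρ) :
    dinf y x + 10 * σ.unit n ≤ 9 * σ.unit (n + 1) := by
  have := hρ.radius_le
  have := hy.2.2
  omega

lemma IsCleanBand.mem_shell (hρ : IsCleanBand σ G n x ρ) (hy : y ∈ band σ n x ρ)
    (hzy : dinf z y ≤ 9 * σ.unit n) : z ∈ σ.shell (n + 1) x := by
  have := hρ.le_radius
  have := hρ.dinf_add_le hy
  have := hy.2.1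
  have := dinf_triangle z y x
  have := dinf_triangle y z x
  have := dinf_comm z y
  have := σ.len_pos n
  have := σ.len_le_unit n
  exact ⟨by omega, by omega⟩

lemma IsCleanBand.exists_mem_track_inter_nonempty (hρ : IsCleanBand σ G n x ρ)
    (hS : σ.Crosses (n + 1) x S) :
    ∃ z ∈ track σ n x ρ, (boxI z (σ.len n) ∩ S).Nonempty := by
  have := hρ.le_radius
  have := hρ.radius_le
  have := σ.len_le_unit n
  exact hS.exists_mem_coarseAnnulus (σ.len n) (by omega) (by omega) (by omega)

lemma reachIn_track (hd : 2 ≤ d) (hy : y ∈ track σ n x ρ) (hz : z ∈ track σ n x ρ) :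
    ReachIn (CoarseAdj (σ.len n)) (track σ n x ρ) y z := by
  have := σ.len_pos n
  have := σ.len_le_unit n
  exact reachIn_coarseAnnulus hd (by omega) (by omega) hy hz

end BadPoints

section Chains

variable {d : ℕ} (σ : Scales) (G : ℕ → V d → Prop)

/-- The union of the boxes of a collection; as in `IsBridge`, the pair `(m, z)` stands for the
`m`-box centred at `z`. -/
def carrier (ℬ : Finset (ℕ × V d)) : Set (V d) := ⋃ b ∈ ℬ, boxI b.2 (σ.len b.1)

/-- The collection of the `m`-boxes centred at the points of `P`. -/
def layer (m : ℕ) (P : Finset (V d)) : Finset (ℕ × V d) := {m} ×ˢ P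

/-- The number of `m`-boxes of a collection. -/
def levelCard (ℬ : Finset (ℕ × V d)) (m : ℕ) : ℕ := (ℬ.filter fun b => b.1 = m).card

/-- Some point of the box of radius `L` around `z` is at distance less than `k` from `S`. -/
def IsNear (L k : ℕ) (S : Set (V d)) (z : V d) : Prop := ∃ p ∈ boxI z L, ∃ s ∈ S, dinf p s < k

/-- A connected collection of good boxes of levels at most `n` in the shell `Σ_n` around `x`. -/
structure IsGoodChain (n : ℕ) (x : V d) (ℬ : Finset (ℕ × V d)) : Prop where
  level_le : ∀ b ∈ ℬ, b.1 ≤ n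
  mem_lattice : ∀ b ∈ ℬ, b.2 ∈ coarseLattice d (σ.len b.1)
  subset_shell : ∀ b ∈ ℬ, boxI b.2 (σ.len b.1) ⊆ σ.shell n x
  good : ∀ b ∈ ℬ, IsGoodBox σ G n b
  conn : IsConnSet (carrier σ ℬ)

/-- The conditions (B2) and (B3) of a bridge with respect to one of its two end sets. -/
structure IsAnchored (S : Set (V d)) (ℬ : Finset (ℕ × V d)) : Prop where
  exists_anchor : ∃ b₀ ∈ ℬ, b₀.1 = 0 ∧ (boxI b₀.2 (σ.len 0) ∩ S).Nonempty ∧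
    ∀ b ∈ ℬ, b ≠ b₀ → boxI b.2 (σ.len b.1) ∩ S = ∅
  far : ∀ b ∈ ℬ, 1 ≤ b.1 → setDistGE (boxI b.2 (σ.len b.1)) S (σ.unit b.1)

/-- Every box of the collection, of whatever level `m`, is at distance at least `κ L_m` from `S`. -/
def IsFar (S : Set (V d)) (ℬ : Finset (ℕ × V d)) : Prop :=
  ∀ b ∈ ℬ, setDistGE (boxI b.2 (σ.len b.1)) S (σ.unit b.1)

variable {σ G} {n m : ℕ} {x y z : V d} {S T : Set (V d)} {ℬ 𝒞 : Finset (ℕ × V d)}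
  {P : Finset (V d)}

lemma forall_mem_layer {p : ℕ × V d → Prop} :
    (∀ b ∈ layer m P, p b) ↔ ∀ z ∈ P, p (m, z) := by
  simp [layer]

lemma carrier_union : carrier σ (ℬ ∪ 𝒞) = carrier σ ℬ ∪ carrier σ 𝒞 :=
  Finset.set_biUnion_union _ _ _

lemma carrier_layer : carrier σ (layer m P) = boxUnion (σ.len m) (P : Set (V d)) := by
  ext p
  simp [carrier, layer, boxUnion]

lemma levelCard_union_le : levelCard (ℬ ∪ 𝒞) m ≤ levelCard ℬ m + levelCard 𝒞 m := by
  rw [levelCard, Finset.filter_union]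
  exact Finset.card_union_le _ _

lemma levelCard_layer : levelCard (layer n P) m = if m = n then P.card else 0 := by
  split_ifs with h
  · rw [levelCard, Finset.filter_true_of_mem (forall_mem_layer.2 fun _ _ => h.symm), layer,
      Finset.card_product, Finset.card_singleton, one_mul]
  · rw [levelCard, Finset.filter_false_of_mem (forall_mem_layer.2 fun _ _ h' => h h'.symm),
      Finset.card_empty]

lemma IsNear.of_inter_nonempty {L k : ℕ} (hk : 0 < k) (h : (boxI z L ∩ S).Nonempty) :
    IsNear L k S z := by
  obtain ⟨p, hp, hpS⟩ := h
  exact ⟨p, hp, p, hpS, by rwa [dinf_self]⟩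

lemma IsNear.exists_dinf_le {L k : ℕ} (h : IsNear L k S z) : ∃ s ∈ S, dinf s z ≤ k + L := by
  obtain ⟨p, hp, s, hs, hps⟩ := h
  have := mem_boxI.1 hp
  have := dinf_comm p s
  have := dinf_triangle s p z
  exact ⟨s, hs, by omega⟩

lemma IsGoodChain.union (hℬ : IsGoodChain σ G n x ℬ) (h𝒞 : IsGoodChain σ G n x 𝒞)
    (hmeet : (carrier σ ℬ ∩ carrier σ 𝒞).Nonempty) : IsGoodChain σ G n x (ℬ ∪ 𝒞) where
  level_le := Finset.forall_mem_union.2 ⟨hℬ.level_le, h𝒞.level_le⟩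
  mem_lattice := Finset.forall_mem_union.2 ⟨hℬ.mem_lattice, h𝒞.mem_lattice⟩
  subset_shell := Finset.forall_mem_union.2 ⟨hℬ.subset_shell, h𝒞.subset_shell⟩
  good := Finset.forall_mem_union.2 ⟨hℬ.good, h𝒞.good⟩
  conn := carrier_union ▸ hℬ.conn.union h𝒞.conn hmeet

lemma IsGoodChain.lift {ρ : ℕ} (hℬ : IsGoodChain σ G n y ℬ) (hx : ¬ Bad σ G (n + 1) x)
    (hρ : IsCleanBand σ G n x ρ) (hy : y ∈ band σ n x ρ) : IsGoodChain σ G (n + 1) x ℬ := by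
  have hshell : ∀ b ∈ ℬ, boxI b.2 (σ.len b.1) ⊆ σ.shell (n + 1) x := fun b hb p hp =>
    hρ.mem_shell hy (hℬ.subset_shell b hb hp).2
  exact
    { level_le := fun b hb => (hℬ.level_le b hb).trans n.le_succ
      mem_lattice := hℬ.mem_lattice
      subset_shell := hshell
      good := fun b hb => (hℬ.good b hb).lift hx (hshell b hb (self_mem_boxI _ _)).2
      conn := hℬ.conn }

lemma isGoodChain_layer_track {ρ : ℕ} (hx : ¬ Bad σ G (n + 1) x) (hρ : IsCleanBand σ G n x ρ)
    (hP : ∀ z ∈ P, z ∈ track σ n x ρ) (hconn : IsConnSet (boxUnion (σ.len n) (P : Set (V d)))) :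
    IsGoodChain σ G (n + 1) x (layer n P) := by
  have hshell (z : V d) (hz : z ∈ P) : boxI z (σ.len n) ⊆ σ.shell (n + 1) x := fun p hp => by
    have := mem_boxI.1 hp
    have := σ.len_le_unit n
    exact hρ.mem_shell (track_subset_band (hP z hz)) (by omega)
  refine ⟨forall_mem_layer.2 fun z _ => n.le_succ, forall_mem_layer.2 fun z hz => (hP z hz).1,
    forall_mem_layer.2 hshell, forall_mem_layer.2 fun z hz => ?_, carrier_layer ▸ hconn⟩
  exact (isGoodBox_self (hρ.not_bad z (track_subset_band (hP z hz))) (by simp [dinf_self])).lift hx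
    (hshell z hz (self_mem_boxI _ _)).2

lemma IsFar.inter_eq_empty (h : IsFar σ S ℬ) {b : ℕ × V d} (hb : b ∈ ℬ) :
    boxI b.2 (σ.len b.1) ∩ S = ∅ := by
  refine eq_empty_of_forall_notMem fun p hp => ?_
  have := h b hb p hp.1 p hp.2
  have := dinf_self p
  have := σ.len_pos b.1
  have := σ.len_le_unit b.1
  omega

lemma isFar_layer (h : ∀ z ∈ P, ¬ IsNear (σ.len m) (σ.unit m) S z) : IsFar σ S (layer m P) :=
  forall_mem_layer.2 fun z hz p hp s hs => not_lt.1 fun hlt => h z hz ⟨p, hp, s, hs, hlt⟩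

lemma IsFar.union (hℬ : IsFar σ S ℬ) (h𝒞 : IsFar σ S 𝒞) : IsFar σ S (ℬ ∪ 𝒞) :=
  Finset.forall_mem_union.2 ⟨hℬ, h𝒞⟩

lemma IsAnchored.union_isFar (hℬ : IsAnchored σ S ℬ) (h𝒞 : IsFar σ S 𝒞) :
    IsAnchored σ S (ℬ ∪ 𝒞) := by
  obtain ⟨b₀, hb₀, hlevel, hmeet, hdisj⟩ := hℬ.exists_anchor
  exact ⟨⟨b₀, Finset.mem_union_left _ hb₀, hlevel, hmeet,
    Finset.forall_mem_union.2 ⟨hdisj, fun b hb _ => h𝒞.inter_eq_empty hb⟩⟩,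
    Finset.forall_mem_union.2 ⟨hℬ.far, fun b hb _ => h𝒞 b hb⟩⟩

lemma IsAnchored.carrier_inter_nonempty (hℬ : IsAnchored σ S ℬ) :
    (carrier σ ℬ ∩ S).Nonempty := by
  obtain ⟨b₀, hb₀, hlevel, hmeet, -⟩ := hℬ.exists_anchor
  rw [← hlevel] at hmeet
  exact hmeet.mono (inter_subset_inter_left S
    (subset_biUnion_of_mem (u := fun b : ℕ × V d => boxI b.2 (σ.len b.1)) hb₀))

lemma isAnchored_layer_zero (hz : z ∈ P) (hzS : (boxI z (σ.len 0) ∩ S).Nonempty)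
    (huniq : ∀ y ∈ P, (boxI y (σ.len 0) ∩ S).Nonempty → y = z) : IsAnchored σ S (layer 0 P) := by
  refine ⟨⟨(0, z), by simpa [layer] using hz, rfl, hzS, ?_⟩, forall_mem_layer.2 fun _ _ h => ?_⟩
  · refine forall_mem_layer.2 fun y hy hne => not_nonempty_iff_eq_empty.1 fun hyS => hne ?_
    rw [huniq y hy hyS]
  · simp at h

lemma boxI_subset_carrier_layer (hz : z ∈ P) : boxI z (σ.len m) ⊆ carrier σ (layer m P) := by
  rw [carrier_layer]
  exact boxI_subset_boxUnion (Finset.mem_coe.2 hz)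

lemma ReachIn.exists_finset_isConnSet_boxUnion {Y : Set (V d)} {L a b : ℕ}
    (h : ReachIn (CoarseAdj L) Y y z) (hY : Y ⊆ coarseAnnulus L x a b) :
    ∃ P ⊆ coarseBall L x b, y ∈ P ∧ z ∈ P ∧ (∀ p ∈ P, p ∈ Y) ∧
      IsConnSet (boxUnion L (P : Set (V d))) := by
  have hsub : cluster (CoarseAdj L) Y y ⊆ coarseBall L x b := fun p hp =>
    Finset.mem_coe.2 (mem_coarseBall.2
      ⟨(hY (ReachIn.right_mem hp)).1, (hY (ReachIn.right_mem hp)).2.2⟩)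
  obtain ⟨P, hP⟩ := ((Finset.finite_toSet _).subset hsub).exists_finset_coe
  have mem_P {p : V d} : p ∈ P ↔ ReachIn (CoarseAdj L) Y y p := by
    rw [← Finset.mem_coe, hP]
    rfl
  refine ⟨P, fun p hp => Finset.mem_coe.1 (hsub (mem_P.1 hp)), mem_P.2 (.refl h.1), mem_P.2 h,
    fun p hp => (mem_P.1 hp).right_mem, ?_⟩
  rw [hP]
  exact isConnSet_boxUnion_cluster L Y y

end Chains

section Bridges

variable {d : ℕ} (σ : Scales) (G : ℕ → V d → Prop)

/-- A good chain that joins `S` to `T`, and that has the properties of a bridge at the end `S`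
only. -/
structure IsHalfBridge (n : ℕ) (x : V d) (S T : Set (V d)) (ℬ : Finset (ℕ × V d)) : Prop
    extends IsGoodChain σ G n x ℬ where
  anchored : IsAnchored σ S ℬ
  inter_nonempty : (carrier σ ℬ ∩ T).Nonempty
  levelCard_le : ∀ m, levelCard ℬ m ≤
    (if m < n then σ.maxBoxes d else 0) + if m = 0 then σ.maxBoxes d else 0

/-- A bridge between `S₁` and `S₂` all of whose boxes are good up to level `n`. -/
structure IsFullBridge (n : ℕ) (x : V d) (S₁ S₂ : Set (V d)) (ℬ : Finset (ℕ × V d)) : Prop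
    extends IsGoodChain σ G n x ℬ where
  anchored_left : IsAnchored σ S₁ ℬ
  anchored_right : IsAnchored σ S₂ ℬ
  levelCard_le : ∀ m, levelCard ℬ m ≤ 4 * σ.maxBoxes d

/-- The centres of `0`-boxes inside the shell `Σ_0`: at level `0` they play the role of `track`. -/
def zeroTrack (x : V d) : Set (V d) :=
  coarseAnnulus (σ.len 0) x (17 * σ.unit 0 / 2 + 1 + σ.len 0) (9 * σ.unit 0 - σ.len 0)

/-- No point of the band is close to both `S₁` and `S₂`. -/
def IsSeparated (n : ℕ) (x : V d) (ρ : ℕ) (S₁ S₂ : Set (V d)) : Prop :=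
  ∀ y ∈ band σ n x ρ, ∀ s₁ ∈ S₁, ∀ s₂ ∈ S₂, dinf s₁ y ≤ 8 * σ.unit n → ¬ dinf s₂ y ≤ 8 * σ.unit n

variable {σ G} {n ρ : ℕ} {x y z w w₁ w₂ : V d} {S T U S₁ S₂ : Set (V d)} {ℬ : Finset (ℕ × V d)}
  {Y : Set (V d)}

lemma isGoodChain_layer_zeroTrack {P : Finset (V d)} (hx : ¬ Bad σ G 0 x)
    (hP : ∀ z ∈ P, z ∈ zeroTrack σ x) (hconn : IsConnSet (boxUnion (σ.len 0) (P : Set (V d)))) :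
    IsGoodChain σ G 0 x (layer 0 P) := by
  refine ⟨forall_mem_layer.2 fun _ _ => le_rfl, forall_mem_layer.2 fun z hz => (hP z hz).1,
    forall_mem_layer.2 fun z hz p hp => ?_, forall_mem_layer.2 fun z hz => ?_,
    carrier_layer ▸ hconn⟩
  · have := (hP z hz).2
    have := σ.len_le_unit 0
    have hpz : dinf p z ≤ σ.len 0 := mem_boxI.1 hp
    have := dinf_comm p z
    have := dinf_triangle p z x
    have := dinf_triangle z p x
    exact ⟨by omega, by omega⟩
  · exact isGoodBox_self hx ((hP z hz).2.2.trans (Nat.sub_le _ _))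

lemma exists_mem_zeroTrack_inter_nonempty (hS : σ.Crosses 0 x S) :
    ∃ z ∈ zeroTrack σ x, (boxI z (σ.len 0) ∩ S).Nonempty := by
  have := σ.len_pos 0
  have := σ.len_le_unit 0
  exact hS.exists_mem_coarseAnnulus (σ.len 0) (by omega) (by omega) (by omega)

lemma reachIn_zeroTrack (hd : 2 ≤ d) (hy : y ∈ zeroTrack σ x) (hz : z ∈ zeroTrack σ x) :
    ReachIn (CoarseAdj (σ.len 0)) (zeroTrack σ x) y z := by
  have := σ.len_pos 0
  have := σ.len_le_unit 0
  exact reachIn_coarseAnnulus hd (by omega) (by omega) hy hz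

lemma exists_anchored_chain_zero (hd : 2 ≤ d) (hx : ¬ Bad σ G 0 x) (h₁ : σ.Crosses 0 x S₁)
    (h₂ : σ.Crosses 0 x S₂) : ∃ P : Finset (V d), P.card ≤ σ.maxBoxes d ∧
      IsGoodChain σ G 0 x (layer 0 P) ∧ IsAnchored σ S₁ (layer 0 P) ∧
      IsAnchored σ S₂ (layer 0 P) := by
  obtain ⟨y, hy, hyS⟩ := exists_mem_zeroTrack_inter_nonempty h₁
  obtain ⟨z, hz, hzS⟩ := exists_mem_zeroTrack_inter_nonempty h₂
  obtain ⟨u, v, hu, hv, huv⟩ := (reachIn_zeroTrack hd hy hz).exists_minimal_crossing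
    (N₁ := fun z => (boxI z (σ.len 0) ∩ S₁).Nonempty)
    (N₂ := fun z => (boxI z (σ.len 0) ∩ S₂).Nonempty) hyS hzS
  obtain ⟨P, hPball, huP, hvP, mem_Y, hconn⟩ :=
    huv.exists_finset_isConnSet_boxUnion (sep_subset (zeroTrack σ x) _)
  have := σ.unit_le_unit_succ 0
  exact ⟨P, (Finset.card_le_card hPball).trans (σ.card_coarseBall_le_maxBoxes 0 x (by omega)),
    isGoodChain_layer_zeroTrack hx (fun z hz => (mem_Y z hz).1) hconn,
    isAnchored_layer_zero huP hu fun z hz => (mem_Y z hz).2.1,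
    isAnchored_layer_zero hvP hv fun z hz => (mem_Y z hz).2.2⟩

lemma exists_isHalfBridge_zero (hd : 2 ≤ d) (hx : ¬ Bad σ G 0 x) (hS : σ.Crosses 0 x S)
    (hT : σ.Crosses 0 x T) : ∃ ℬ, IsHalfBridge σ G 0 x S T ℬ := by
  obtain ⟨P, hcard, hchain, hanchS, hanchT⟩ := exists_anchored_chain_zero hd hx hS hT
  refine ⟨layer 0 P, hchain, hanchS, hanchT.carrier_inter_nonempty, fun m => ?_⟩
  rw [levelCard_layer]
  grind

lemma exists_isFullBridge_zero (hd : 2 ≤ d) (hx : ¬ Bad σ G 0 x) (h₁ : σ.Crosses 0 x S₁)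
    (h₂ : σ.Crosses 0 x S₂) : ∃ ℬ, IsFullBridge σ G 0 x S₁ S₂ ℬ := by
  obtain ⟨P, hcard, hchain, hanch₁, hanch₂⟩ := exists_anchored_chain_zero hd hx h₁ h₂
  refine ⟨layer 0 P, hchain, hanch₁, hanch₂, fun m => ?_⟩
  rw [levelCard_layer]
  grind

lemma IsHalfBridge.lift (hℬ : IsHalfBridge σ G n y S T ℬ) (hx : ¬ Bad σ G (n + 1) x)
    (hρ : IsCleanBand σ G n x ρ) (hy : y ∈ band σ n x ρ) : IsHalfBridge σ G (n + 1) x S T ℬ where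
  toIsGoodChain := hℬ.toIsGoodChain.lift hx hρ hy
  anchored := hℬ.anchored
  inter_nonempty := hℬ.inter_nonempty
  levelCard_le m := by
    have := hℬ.levelCard_le m
    grind

lemma IsFullBridge.lift (hℬ : IsFullBridge σ G n y S₁ S₂ ℬ) (hx : ¬ Bad σ G (n + 1) x)
    (hρ : IsCleanBand σ G n x ρ) (hy : y ∈ band σ n x ρ) :
    IsFullBridge σ G (n + 1) x S₁ S₂ ℬ where
  toIsGoodChain := hℬ.toIsGoodChain.lift hx hρ hy
  anchored_left := hℬ.anchored_left
  anchored_right := hℬ.anchored_right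
  levelCard_le := hℬ.levelCard_le

lemma exists_approach (h : ReachIn (CoarseAdj (σ.len n)) Y y z)
    (hy : ¬ IsNear (σ.len n) (σ.unit n) S y) (hz : IsNear (σ.len n) (σ.unit n) S z) :
    ∃ w, ReachIn (CoarseAdj (σ.len n)) (Y \ {z | IsNear (σ.len n) (σ.unit n) S z}) y w ∧
      ∃ s ∈ S, dinf s w ≤ 2 * σ.unit n := by
  obtain ⟨w, v, hyw, hwv, -, hv⟩ := h.exists_step_into hy hz
  obtain ⟨s, hs, hsv⟩ := hv.exists_dinf_le
  have := dinf_le_of_coarseAdj hwv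
  have := dinf_comm w v
  have := dinf_triangle s v w
  have := σ.len_pos n
  have := σ.len_le_unit n
  exact ⟨w, hyw, s, hs, by omega⟩

lemma exists_isGoodChain_layer (hx : ¬ Bad σ G (n + 1) x) (hρ : IsCleanBand σ G n x ρ)
    (hY : Y ⊆ track σ n x ρ) (h : ReachIn (CoarseAdj (σ.len n)) Y y z) :
    ∃ P : Finset (V d), P.card ≤ σ.maxBoxes d ∧ y ∈ P ∧ z ∈ P ∧ (∀ p ∈ P, p ∈ Y) ∧
      IsGoodChain σ G (n + 1) x (layer n P) := by
  obtain ⟨P, hPball, hy, hz, hPY, hconn⟩ := h.exists_finset_isConnSet_boxUnion hY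
  have := hρ.radius_le
  exact ⟨P, (Finset.card_le_card hPball).trans (σ.card_coarseBall_le_maxBoxes n x (by omega)), hy,
    hz, hPY, isGoodChain_layer_track hx hρ (fun p hp => hY (hPY p hp)) hconn⟩

lemma IsHalfBridge.union_layer {P : Finset (V d)} (hℬ : IsHalfBridge σ G n y S U ℬ)
    (hx : ¬ Bad σ G (n + 1) x) (hρ : IsCleanBand σ G n x ρ) (hy : y ∈ band σ n x ρ)
    (hP : IsGoodChain σ G (n + 1) x (layer n P)) (hcard : P.card ≤ σ.maxBoxes d)
    (hfar : IsFar σ S (layer n P)) (hU : U = carrier σ (layer n P)) (hT : (U ∩ T).Nonempty) :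
    IsHalfBridge σ G (n + 1) x S T (ℬ ∪ layer n P) where
  toIsGoodChain := (hℬ.toIsGoodChain.lift hx hρ hy).union hP (hU ▸ hℬ.inter_nonempty)
  anchored := hℬ.anchored.union_isFar hfar
  inter_nonempty := hT.mono
    (inter_subset_inter_left T (by rw [carrier_union, ← hU]; exact subset_union_right))
  levelCard_le m := by
    have := hℬ.levelCard_le m
    have := levelCard_union_le (ℬ := ℬ) (𝒞 := layer n P) (m := m)
    rw [levelCard_layer] at this
    grind

lemma exists_isHalfBridge_succ (hd : 2 ≤ d)
    (ih : ∀ (y : V d) (S T : Set (V d)), ¬ Bad σ G n y → σ.Crosses n y S → σ.Crosses n y T →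
      ∃ ℬ, IsHalfBridge σ G n y S T ℬ)
    (hx : ¬ Bad σ G (n + 1) x) (hS : σ.Crosses (n + 1) x S) (hT : σ.Crosses (n + 1) x T) :
    ∃ ℬ, IsHalfBridge σ G (n + 1) x S T ℬ := by
  obtain ⟨ρ, hρ⟩ := exists_isCleanBand hx
  obtain ⟨zT, hzT, t, htz, htT⟩ := hρ.exists_mem_track_inter_nonempty hT
  obtain ⟨zS, hzS, hzSS⟩ := hρ.exists_mem_track_inter_nonempty hS
  have hband := track_subset_band hzT
  have := mem_boxI.1 htz
  have := σ.len_pos n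
  have := σ.len_le_unit n
  by_cases hnear : IsNear (σ.len n) (σ.unit n) S zT
  · obtain ⟨s, hs, hsz⟩ := hnear.exists_dinf_le
    obtain ⟨ℬ, hℬ⟩ := ih zT S T (hρ.not_bad zT hband)
      (hS.descend hs (by omega) (hρ.dinf_add_le hband))
      (hT.descend htT (by omega) (hρ.dinf_add_le hband))
    exact ⟨ℬ, hℬ.lift hx hρ hband⟩
  obtain ⟨w, hw, s, hs, hsw⟩ := exists_approach (reachIn_track hd hzT hzS) hnear
    (.of_inter_nonempty (by omega) hzSS)
  obtain ⟨P, hcard, hzP, hwP, hPY, hchain⟩ := exists_isGoodChain_layer hx hρ sdiff_subset hw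
  have hwband := track_subset_band hw.right_mem.1
  set U := carrier σ (layer n P) with hU
  have hTU : (U ∩ T).Nonempty := ⟨t, boxI_subset_carrier_layer hzP htz, htT⟩
  -- The half-bridge at `w` may hit `T` before it hits `U`, so both are allowed as its target.
  obtain ⟨ℬ, hℬ⟩ := ih w S (T ∪ U) (hρ.not_bad w hwband)
    (hS.descend hs (by omega) (hρ.dinf_add_le hwband))
    (hT.descend_union hchain.conn hTU (boxI_subset_carrier_layer hwP (self_mem_boxI _ _))
      (hρ.dinf_add_le hwband))
  rcases union_nonempty.1 (inter_union_distrib_left _ T U ▸ hℬ.inter_nonempty) with hmeet | hmeet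
  · exact ⟨ℬ, { hℬ with inter_nonempty := hmeet : IsHalfBridge σ G n w S T ℬ }.lift hx hρ hwband⟩
  · exact ⟨_, { hℬ with inter_nonempty := hmeet : IsHalfBridge σ G n w S U ℬ }.union_layer hx hρ
      hwband hchain hcard (isFar_layer fun z hz => (hPY z hz).2) hU hTU⟩

lemma exists_isHalfBridge (hd : 2 ≤ d) (hx : ¬ Bad σ G n x) (hS : σ.Crosses n x S)
    (hT : σ.Crosses n x T) : ∃ ℬ, IsHalfBridge σ G n x S T ℬ := by
  induction n generalizing x S T with
  | zero => exact exists_isHalfBridge_zero hd hx hS hT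
  | succ n ih => exact exists_isHalfBridge_succ hd (fun _ _ _ => ih) hx hS hT

lemma IsSeparated.symm (h : IsSeparated σ n x ρ S₁ S₂) : IsSeparated σ n x ρ S₂ S₁ :=
  fun y hy s₂ hs₂ s₁ hs₁ h₂ h₁ => h y hy s₁ hs₁ s₂ hs₂ h₁ h₂

lemma IsSeparated.not_isNear (h : IsSeparated σ n x ρ S₁ S₂) (hy : y ∈ track σ n x ρ)
    {s : V d} (hs : s ∈ S₁) (hsy : dinf s y ≤ 8 * σ.unit n) :
    ¬ IsNear (σ.len n) (σ.unit n) S₂ y := fun hnear => by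
  obtain ⟨s₂, hs₂, hs₂y⟩ := hnear.exists_dinf_le
  have := σ.len_le_unit n
  exact h y (track_subset_band hy) s hs s₂ hs₂ hsy (by omega)

-- A lattice point near the middle of two closer points would see both sets.
lemma IsSeparated.lt_dinf (h : IsSeparated σ n x ρ S₁ S₂) (hw : w ∈ track σ n x ρ) {s₁ s₂ : V d}
    (h₁ : s₁ ∈ S₁) (h₂ : s₂ ∈ S₂) (hsw : dinf s₁ w ≤ 2 * σ.unit n) :
    15 * σ.unit n < dinf s₁ s₂ := by
  by_contra! hle
  have := σ.len_pos n
  have := σ.len_le_unit n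
  obtain ⟨y, hy, hy₁, hy₂⟩ := exists_mem_coarseLattice_between (r := 15 * σ.unit n / 2 + 1)
    (σ.len n) (hle.trans (by omega))
  have := dinf_triangle y s₁ w
  have := dinf_comm y s₁
  exact h y (mem_band_of_dinf_track_le hw hy (by omega)) s₁ h₁ s₂ h₂ (by omega) (by omega)

lemma IsSeparated.isFar (h : IsSeparated σ n x ρ S₁ S₂) (hw : w ∈ track σ n x ρ) {s : V d}
    (hs : s ∈ S₁) (hsw : dinf s w ≤ 2 * σ.unit n) (hℬ : IsGoodChain σ G n w ℬ) : IsFar σ S₂ ℬ := by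
  intro b hb p hp s₂ hs₂
  by_contra! hlt
  have := h.lt_dinf hw hs hs₂ hsw
  have := (hℬ.subset_shell b hb hp).2
  have := σ.unit_mono (hℬ.level_le b hb)
  have := dinf_comm p w
  have := dinf_triangle s w s₂
  have := dinf_triangle w p s₂
  omega

lemma IsSeparated.exists_reachIn_track (hd : 2 ≤ d) (h : IsSeparated σ n x ρ S₁ S₂)
    (hρ : IsCleanBand σ G n x ρ) (h₁ : σ.Crosses (n + 1) x S₁) (h₂ : σ.Crosses (n + 1) x S₂) :
    ∃ w₁ w₂, (∃ s ∈ S₁, dinf s w₁ ≤ 2 * σ.unit n) ∧ (∃ s ∈ S₂, dinf s w₂ ≤ 2 * σ.unit n) ∧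
      ReachIn (CoarseAdj (σ.len n)) ((track σ n x ρ \ {z | IsNear (σ.len n) (σ.unit n) S₂ z}) \
        {z | IsNear (σ.len n) (σ.unit n) S₁ z}) w₂ w₁ := by
  obtain ⟨u, hu, s₁, hs₁u, hs₁⟩ := hρ.exists_mem_track_inter_nonempty h₁
  obtain ⟨v, hv, hv₂⟩ := hρ.exists_mem_track_inter_nonempty h₂
  have := σ.len_pos n
  have := σ.len_le_unit n
  have := mem_boxI.1 hs₁u
  obtain ⟨w₂, huw₂, s₂, hs₂, hs₂w₂⟩ := exists_approach (reachIn_track hd hu hv)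
    (h.not_isNear hu hs₁ (by omega)) (.of_inter_nonempty (by omega) hv₂)
  obtain ⟨w₁, hw, s, hs, hsw₁⟩ := exists_approach huw₂.symm
    (h.symm.not_isNear huw₂.right_mem.1 hs₂ (by omega))
    (.of_inter_nonempty (by omega) ⟨s₁, hs₁u, hs₁⟩)
  exact ⟨w₁, w₂, ⟨s, hs, hsw₁⟩, ⟨s₂, hs₂, hs₂w₂⟩, hw⟩

lemma isFullBridge_union {ℬ₁ ℬ₂ : Finset (ℕ × V d)} {P : Finset (V d)}
    (hx : ¬ Bad σ G (n + 1) x) (hρ : IsCleanBand σ G n x ρ)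
    (hw₁ : w₁ ∈ band σ n x ρ) (hw₂ : w₂ ∈ band σ n x ρ)
    (hℬ₁ : IsHalfBridge σ G n w₁ S₁ (carrier σ (layer n P)) ℬ₁)
    (hℬ₂ : IsHalfBridge σ G n w₂ S₂ (carrier σ (layer n P)) ℬ₂)
    (hP : IsGoodChain σ G (n + 1) x (layer n P)) (hcard : P.card ≤ σ.maxBoxes d)
    (hfar₁ : IsFar σ S₁ (layer n P ∪ ℬ₂)) (hfar₂ : IsFar σ S₂ (ℬ₁ ∪ layer n P)) :
    IsFullBridge σ G (n + 1) x S₁ S₂ (ℬ₁ ∪ layer n P ∪ ℬ₂) where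
  toIsGoodChain := ((hℬ₁.toIsGoodChain.lift hx hρ hw₁).union hP hℬ₁.inter_nonempty).union
    (hℬ₂.toIsGoodChain.lift hx hρ hw₂) (hℬ₂.inter_nonempty.mono (by
      rw [inter_comm, carrier_union]
      exact inter_subset_inter_left _ subset_union_right))
  anchored_left := Finset.union_assoc ℬ₁ _ _ ▸ hℬ₁.anchored.union_isFar hfar₁
  anchored_right := Finset.union_comm ℬ₂ _ ▸ hℬ₂.anchored.union_isFar hfar₂
  levelCard_le m := by
    have := hℬ₁.levelCard_le m
    have := hℬ₂.levelCard_le m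
    have := levelCard_union_le (ℬ := ℬ₁ ∪ layer n P) (𝒞 := ℬ₂) (m := m)
    have hunion := levelCard_union_le (ℬ := ℬ₁) (𝒞 := layer n P) (m := m)
    rw [levelCard_layer] at hunion
    grind

lemma IsSeparated.exists_isFullBridge (hd : 2 ≤ d) (h : IsSeparated σ n x ρ S₁ S₂)
    (hx : ¬ Bad σ G (n + 1) x) (hρ : IsCleanBand σ G n x ρ) (h₁ : σ.Crosses (n + 1) x S₁)
    (h₂ : σ.Crosses (n + 1) x S₂) : ∃ ℬ, IsFullBridge σ G (n + 1) x S₁ S₂ ℬ := by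
  obtain ⟨w₁, w₂, ⟨s₁, hs₁, hsw₁⟩, ⟨s₂, hs₂, hsw₂⟩, hw⟩ := h.exists_reachIn_track hd hρ h₁ h₂
  obtain ⟨P, hcard, hwP₂, hwP₁, hPY, hchain⟩ := exists_isGoodChain_layer hx hρ
    (sdiff_subset.trans sdiff_subset) hw
  have ht₁ := hw.right_mem.1.1
  have ht₂ := hw.1.1.1
  have hb₁ := track_subset_band ht₁
  have hb₂ := track_subset_band ht₂
  have mem_carrier {z : V d} (hz : z ∈ P) : z ∈ carrier σ (layer n P) :=
    boxI_subset_carrier_layer hz (self_mem_boxI z _)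
  have hdist : 10 * σ.unit n ≤ dinf w₁ w₂ := by
    have := h.lt_dinf ht₁ hs₁ hs₂ hsw₁
    have := dinf_comm w₂ s₂
    have := dinf_triangle s₁ w₁ s₂
    have := dinf_triangle w₁ w₂ s₂
    omega
  obtain ⟨ℬ₁, hℬ₁⟩ := exists_isHalfBridge hd (hρ.not_bad w₁ hb₁)
    (h₁.descend hs₁ (by omega) (hρ.dinf_add_le hb₁))
    (Scales.crosses_of_isConnSet hchain.conn (mem_carrier hwP₁) (mem_carrier hwP₂)
      (dinf_comm w₁ w₂ ▸ hdist))
  obtain ⟨ℬ₂, hℬ₂⟩ := exists_isHalfBridge hd (hρ.not_bad w₂ hb₂)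
    (h₂.descend hs₂ (by omega) (hρ.dinf_add_le hb₂))
    (Scales.crosses_of_isConnSet hchain.conn (mem_carrier hwP₂) (mem_carrier hwP₁) hdist)
  exact ⟨_, isFullBridge_union hx hρ hb₁ hb₂ hℬ₁ hℬ₂ hchain hcard
    ((isFar_layer fun z hz => (hPY z hz).2).union
      (h.symm.isFar ht₂ hs₂ hsw₂ hℬ₂.toIsGoodChain))
    ((h.isFar ht₁ hs₁ hsw₁ hℬ₁.toIsGoodChain).union (isFar_layer fun z hz => (hPY z hz).1.2))⟩

lemma exists_isFullBridge (hd : 2 ≤ d) (hx : ¬ Bad σ G n x) (h₁ : σ.Crosses n x S₁)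
    (h₂ : σ.Crosses n x S₂) : ∃ ℬ, IsFullBridge σ G n x S₁ S₂ ℬ := by
  induction n generalizing x with
  | zero => exact exists_isFullBridge_zero hd hx h₁ h₂
  | succ n ih =>
    obtain ⟨ρ, hρ⟩ := exists_isCleanBand hx
    by_cases hsep : IsSeparated σ n x ρ S₁ S₂
    · exact hsep.exists_isFullBridge hd hx hρ h₁ h₂
    · simp only [IsSeparated, not_forall, not_not] at hsep
      obtain ⟨y, hy, s₁, hs₁, s₂, hs₂, hsy₁, hsy₂⟩ := hsep
      obtain ⟨ℬ, hℬ⟩ := ih (hρ.not_bad y hy) (h₁.descend hs₁ hsy₁ (hρ.dinf_add_le hy))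
        (h₂.descend hs₂ hsy₂ (hρ.dinf_add_le hy))
      exact ⟨ℬ, hℬ.lift hx hρ hy⟩

end Bridges

section Translation

variable {d n : ℕ} {σ : Scales} {x : V d} {Ω : Type*}

lemma shell_eq_sgAt (n : ℕ) (x : V d) : σ.shell n x = SgAt d σ.ℓ₀ σ.L₀ σ.κ n x := by
  ext p
  simp only [Scales.shell, SgAt, Set.mem_sdiff, mem_boxI, mem_ofPred_eq, not_le, mul_assoc,
    Scales.unit, Scales.len, and_comm]

lemma AdmissibleAt.crosses {S : Set (V d)} (hS : AdmissibleAt d σ.ℓ₀ σ.L₀ σ.κ n x S) :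
    σ.Crosses n x S := by
  have hscale (c : ℕ) : c * σ.κ * Lsc σ.ℓ₀ σ.L₀ n = c * σ.unit n := mul_assoc _ _ _
  simp only [AdmissibleAt, hscale] at hS
  refine ⟨fun s hs => ?_, ?_⟩
  · obtain ⟨t, hst, -, z, hz, htz⟩ := hS.1 s hs
    have := not_le.1 (mt mem_boxI.2 hz)
    have := dinf_le_one_of_adj (symm_of adj htz)
    have := dinf_triangle z t x
    exact ⟨t, connIn_iff_reachIn.1 hst, by omega⟩
  · obtain ⟨s, -, t, hst, ht⟩ := hS.2
    exact ⟨t, (connIn_iff_reachIn.1 hst).right_mem, mem_boxI.1 ht⟩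

lemma IsFullBridge.isBridge {G : ℕ → V d → Prop} {S₁ S₂ : Set (V d)} {ℬ : Finset (ℕ × V d)}
    (hℬ : IsFullBridge σ G n x S₁ S₂ ℬ) : IsBridge d σ.ℓ₀ σ.L₀ σ.κ (2 * σ.maxBoxes d) n
      (SgAt d σ.ℓ₀ σ.L₀ σ.κ n x) S₁ S₂ ℬ where
  boxes b hb := ⟨hℬ.level_le b hb, hℬ.mem_lattice b hb, shell_eq_sgAt n x ▸ hℬ.subset_shell b hb⟩
  conn := hℬ.conn
  ends := by
    obtain ⟨b₁, hb₁, hlevel₁, hmeet₁, hdisj₁⟩ := hℬ.anchored_left.exists_anchor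
    obtain ⟨b₂, hb₂, hlevel₂, hmeet₂, hdisj₂⟩ := hℬ.anchored_right.exists_anchor
    refine ⟨b₁, hb₁, b₂, hb₂, hlevel₁, hlevel₂, hmeet₁, hmeet₂, fun b hb hne₁ hne₂ => ?_⟩
    rw [inter_union_distrib_left, union_empty_iff]
    exact ⟨hdisj₁ b hb hne₁, hdisj₂ b hb hne₂⟩
  far b hb hlevel p hp s hs := hs.elim (hℬ.anchored_left.far b hb hlevel p hp s)
    (hℬ.anchored_right.far b hb hlevel p hp s)
  count m := (hℬ.levelCard_le m).trans_eq (by ring)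

/-- The families `F` and `H` as one family indexed by the level. -/
def seed (F : V d → Set Ω) (H : ℕ → V d → Set Ω) (m : ℕ) (z : V d) : Set Ω :=
  if m = 0 then F z else H m z

/-- The event that `x` is bad at level `n`. -/
def badEvent (σ : Scales) (F : V d → Set Ω) (H : ℕ → V d → Set Ω) (n : ℕ) (x : V d) : Set Ω :=
  {ω | Bad σ (fun m z => ω ∈ seed F H m z) n x}

/-- The event that some seed of level `n` near `x` fails. -/
def badSeedEvent (σ : Scales) (F : V d → Set Ω) (H : ℕ → V d → Set Ω) (n : ℕ) (x : V d) : Set Ω :=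
  {ω | HasBadSeed σ (fun m z => ω ∈ seed F H m z) n x}

variable {F : V d → Set Ω} {H : ℕ → V d → Set Ω} {ω : Ω}

lemma badEvent_succ (n : ℕ) (x : V d) : badEvent σ F H (n + 1) x = badSeedEvent σ F H (n + 1) x ∪
    ⋃ z₁ ∈ band σ n x (innerBand σ n), ⋃ z₂ ∈ band σ n x (outerBand σ n),
      badEvent σ F H n z₁ ∩ badEvent σ F H n z₂ := by
  ext ω
  simp only [badEvent, badSeedEvent, Bad, mem_union, mem_iUnion, mem_inter_iff, mem_ofPred_eq,
    exists_prop]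

lemma goodCol_of_forall_seed {ℬ : Finset (ℕ × V d)}
    (hlattice : ∀ b ∈ ℬ, b.2 ∈ coarseLattice d (σ.len b.1))
    (h : ∀ b ∈ ℬ, ∀ j, b.1 ≤ j → ∀ y ∈ coarseLattice d (σ.len j), b.2 ∈ boxI y (σ.len j) →
      ω ∈ seed F H j y) : GoodCol d σ.ℓ₀ σ.L₀ F H ℬ ω := by
  refine ⟨fun b hb hb₀ => ?_, fun b hb j hj y hy hby => ?_⟩
  · have := h b hb b.1 le_rfl b.2 (hlattice b hb) (self_mem_boxI _ _)
    rwa [seed, if_pos hb₀] at this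
  · have := h b hb j ((le_max_left _ _).trans hj) y hy hby
    rwa [seed, if_neg (Nat.one_le_iff_ne_zero.1 ((le_max_right _ _).trans hj))] at this

lemma mem_gEvent (hd : 2 ≤ d) (annulus : Bool) (hbad : ω ∉ badEvent σ F H n x)
    (htail : ∀ j, n < j → ω ∉ badSeedEvent σ F H j x) :
    ω ∈ GEvent d σ.ℓ₀ σ.L₀ σ.κ (2 * σ.maxBoxes d) F H annulus n x := by
  intro S₁ S₂ _ _ hS₁ hS₂
  obtain ⟨ℬ, hℬ⟩ := exists_isFullBridge hd hbad hS₁.crosses hS₂.crosses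
  refine ⟨ℬ, hℬ.isBridge, goodCol_of_forall_seed hℬ.mem_lattice fun b hb j hbj y hy hby => ?_⟩
  obtain hj | hj := le_or_gt j n
  · exact hℬ.good b hb j hbj hj y hy hby
  · have hbx := (hℬ.subset_shell b hb (self_mem_boxI _ _)).2
    have := σ.unit_mono hj.le
    exact seed_of_not_hasBadSeed (G := fun m z => ω ∈ seed F H m z) (htail j hj) hy hby (by omega)

end Translation

section Independence

lemma measure_biInter_compl_of_iIndepSet {Ω ι : Type*} [MeasurableSpace Ω] {P : Measure Ω}
    {T : Finset ι} {s : ι → Set Ω} (h : iIndepSet (fun t : T => s t) P) :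
    P (⋂ t ∈ T, (s t)ᶜ) = ∏ t ∈ T, P (s t)ᶜ := by
  have hmeas (t : T) : MeasurableSet[MeasurableSpace.generateFrom {s t}] (s t)ᶜ :=
    (MeasurableSpace.measurableSet_generateFrom (mem_singleton _)).compl
  have := ((iIndepSet_iff_iIndep _ _).1 h).meas_iInter hmeas
  rwa [iInter_subtype, Finset.prod_coe_sort T fun t => P (s t)ᶜ] at this

/-- Boxes of the same level in `T` are far enough apart for `(C2)` to apply to their seeds. -/
def IsSpread {d : ℕ} (σ : Scales) (T : Finset (ℕ × V d)) : Prop :=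
  ∀ t ∈ T, ∀ t' ∈ T, t ≠ t' → t.1 = t'.1 → σ.κ * (2 * σ.len t.1 + 1) ≤ 2 * dinf t.2 t'.2

/-- The event that all seeds of the boxes in `T` fail. -/
def allFail {d : ℕ} {Ω : Type*} (F : V d → Set Ω) (H : ℕ → V d → Set Ω) (T : Finset (ℕ × V d)) :
    Set Ω :=
  ⋂ t ∈ T, (seed F H t.1 t.2)ᶜ

/-- The `σ`-algebra generated by the seeds of level `m`. -/
abbrev seedSigma {d : ℕ} {Ω : Type*} (σ : Scales) (F : V d → Set Ω) (H : ℕ → V d → Set Ω) (m : ℕ) :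
    MeasurableSpace Ω :=
  MeasurableSpace.generateFrom {A | ∃ z ∈ coarseLattice d (σ.len m), A = seed F H m z}

lemma dinf_const_mul_le {d : ℕ} (a : ℕ) (u v : V d) :
    dinf (fun i => (a : ℤ) * u i) (fun i => (a : ℤ) * v i) ≤ a * dinf u v :=
  dinf_le_iff.2 fun i => by
    rw [← mul_sub, Int.natAbs_mul, Int.natAbs_natCast]
    exact Nat.mul_le_mul_left a (natAbs_sub_le_dinf u v i)

variable {d m : ℕ} {σ : Scales} {Ω : Type*} [MeasurableSpace Ω] {P : Measure Ω}
  {F : V d → Set Ω} {H : ℕ → V d → Set Ω} {T : Finset (ℕ × V d)}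

lemma iIndep_seedSigma (hC1 : CondC1 d σ.ℓ₀ σ.L₀ P F H) : iIndep (seedSigma σ F H) P := by
  unfold CondC1 at hC1
  convert hC1 using 3 with m
  by_cases hm : m = 0
  · subst hm
    rfl
  · simp only [seed, if_neg hm]
    rfl

lemma iIndepSet_seed_const_mul (hC2 : CondC2 d σ.ℓ₀ σ.L₀ σ.κ P F H) (m : ℕ) {U : Finset (V d)}
    (hU : ∀ u ∈ U, ∀ v ∈ U, u ≠ v → σ.κ ≤ 2 * dinf u v) :
    iIndepSet (fun u : U => seed F H m fun i => ((2 * σ.len m + 1 : ℕ) : ℤ) * u.1 i) P := by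
  obtain rfl | hm := Nat.eq_zero_or_pos m
  · simpa [seed] using! (hC2 U hU).1
  · simpa [seed, hm.ne'] using! (hC2 U hU).2 m hm

lemma iIndepSet_seed_of_level_eq (hC2 : CondC2 d σ.ℓ₀ σ.L₀ σ.κ P F H)
    (hlevel : ∀ t ∈ T, t.1 = m) (hT : ∀ t ∈ T, t.2 ∈ coarseLattice d (σ.len t.1))
    (hspread : IsSpread σ T) : iIndepSet (fun t : T => seed F H t.1.1 t.1.2) P := by
  classical
  set a : ℕ := 2 * σ.len m + 1 with ha
  let quot (t : ℕ × V d) : V d := fun i => t.2 i / a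
  have mul_quot (t) (ht : t ∈ T) : (fun i => (a : ℤ) * quot t i) = t.2 := funext fun i =>
    Int.mul_ediv_cancel' (by simpa only [hlevel t ht] using hT t ht i)
  have quot_inj (t) (ht : t ∈ T) (t') (ht' : t' ∈ T) (h : quot t = quot t') : t = t' :=
    Prod.ext ((hlevel t ht).trans (hlevel t' ht').symm) <| by
      rw [← mul_quot t ht, ← mul_quot t' ht', h]
  have hsep : ∀ u ∈ T.image quot, ∀ v ∈ T.image quot, u ≠ v → σ.κ ≤ 2 * dinf u v := by
    simp only [Finset.forall_mem_image]
    intro t ht t' ht' hne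
    have h := hspread t ht t' ht' (fun h => hne (h ▸ rfl))
      ((hlevel t ht).trans (hlevel t' ht').symm)
    rw [hlevel t ht, ← mul_quot t ht, ← mul_quot t' ht', ← ha] at h
    have hle := dinf_const_mul_le a (quot t) (quot t')
    exact Nat.le_of_mul_le_mul_left (by linarith) (show 0 < a by omega)
  have hindep := (iIndepSet_seed_const_mul hC2 m hsep).precomp
    (g := fun t : T => ⟨quot t, Finset.mem_image_of_mem quot t.2⟩)
    fun t t' h => Subtype.ext (quot_inj t t.2 t' t'.2 (congrArg Subtype.val h))
  convert hindep using 2 with t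
  simp only [Function.comp_apply, ← ha, mul_quot t t.2, hlevel t t.2]

lemma measure_allFail (hC1 : CondC1 d σ.ℓ₀ σ.L₀ P F H) (hC2 : CondC2 d σ.ℓ₀ σ.L₀ σ.κ P F H)
    (hT : ∀ t ∈ T, t.2 ∈ coarseLattice d (σ.len t.1)) (hspread : IsSpread σ T) :
    P (allFail F H T) = ∏ t ∈ T, P (seed F H t.1 t.2)ᶜ := by
  classical
  let slice (m : ℕ) : Finset (ℕ × V d) := T.filter fun t => t.1 = m
  have slice_subset (m) : ∀ t ∈ slice m, t ∈ T := Finset.filter_subset _ T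
  have level_eq (m) : ∀ t ∈ slice m, t.1 = m := fun t ht => (Finset.mem_filter.1 ht).2
  have hslices : allFail F H T = ⋂ m ∈ T.image Prod.fst, allFail F H (slice m) := by
    ext ω
    simp only [allFail, slice, mem_iInter, Finset.mem_filter]
    exact ⟨fun h _ _ t ht => h t ht.1,
      fun h t ht => h t.1 (Finset.mem_image_of_mem _ ht) t ⟨ht, rfl⟩⟩
  have hmeas (m) : MeasurableSet[seedSigma σ F H m] (allFail F H (slice m)) :=
    Finset.measurableSet_biInter _ fun t ht => by
      refine (MeasurableSpace.measurableSet_generateFrom ?_).compl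
      rw [← level_eq m t ht]
      exact ⟨t.2, hT t (slice_subset m t ht), rfl⟩
  have hlevel (m) : P (allFail F H (slice m)) = ∏ t ∈ slice m, P (seed F H t.1 t.2)ᶜ :=
    measure_biInter_compl_of_iIndepSet <| iIndepSet_seed_of_level_eq hC2 (level_eq m)
      (fun t ht => hT t (slice_subset m t ht))
      fun t ht t' ht' => hspread t (slice_subset m t ht) t' (slice_subset m t' ht')
  rw [hslices, (iIndep_seedSigma hC1).meas_biInter fun m _ => hmeas m,
    Finset.prod_congr rfl fun m _ => hlevel m]
  exact Finset.prod_fiberwise_of_maps_to (fun t ht => Finset.mem_image_of_mem _ ht) _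

end Independence

section SeedPatterns

/-- A spread set of boxes of level at most `n` near `x`: the boxes whose seeds can be responsible
for `x` being bad at level `n`. -/
structure IsSeedPattern {d : ℕ} (σ : Scales) (n : ℕ) (x : V d) (T : Finset (ℕ × V d)) : Prop where
  level_le : ∀ t ∈ T, t.1 ≤ n
  mem_lattice : ∀ t ∈ T, t.2 ∈ coarseLattice d (σ.len t.1)
  dinf_le : ∀ t ∈ T, dinf t.2 x ≤ 10 * σ.unit n
  spread : IsSpread σ T

variable {d n : ℕ} {σ : Scales} {x z z₁ z₂ : V d} {T T₁ T₂ : Finset (ℕ × V d)}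

lemma isSeedPattern_singleton (hz : z ∈ coarseBall (σ.len n) x (10 * σ.unit n)) :
    IsSeedPattern σ n x {(n, z)} := by
  rw [mem_coarseBall] at hz
  constructor <;> simp [IsSpread, hz]

lemma IsSeedPattern.succ (hT : IsSeedPattern σ n z T) (hzx : dinf z x ≤ 9 * σ.unit (n + 1)) :
    IsSeedPattern σ (n + 1) x T where
  level_le t ht := (hT.level_le t ht).trans n.le_succ
  mem_lattice := hT.mem_lattice
  dinf_le t ht := by
    have := hT.dinf_le t ht
    have := dinf_triangle t.2 z x
    have := σ.unit_le_unit_succ n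
    omega
  spread := hT.spread

lemma IsSeedPattern.union [DecidableEq (ℕ × V d)] (h₁ : IsSeedPattern σ n x T₁)
    (h₂ : IsSeedPattern σ n x T₂) (hfar : ∀ t₁ ∈ T₁, ∀ t₂ ∈ T₂, t₁.1 = t₂.1 →
      σ.κ * (2 * σ.len t₁.1 + 1) ≤ 2 * dinf t₁.2 t₂.2) : IsSeedPattern σ n x (T₁ ∪ T₂) := by
  constructor <;> simp only [IsSpread, Finset.mem_union]
  · exact fun t ht => ht.elim (h₁.level_le t) (h₂.level_le t)
  · exact fun t ht => ht.elim (h₁.mem_lattice t) (h₂.mem_lattice t)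
  · exact fun t ht => ht.elim (h₁.dinf_le t) (h₂.dinf_le t)
  · rintro t (ht | ht) t' (ht' | ht') hne hlevel
    · exact h₁.spread t ht t' ht' hne hlevel
    · exact hfar t ht t' ht' hlevel
    · rw [hlevel, dinf_comm]
      exact hfar t' ht' t ht hlevel.symm
    · exact h₂.spread t ht t' ht' hne hlevel

lemma coarseAnnulus_subset_coarseBall {L a b r : ℕ} (hbr : b ≤ r) :
    coarseAnnulus L x a b ⊆ coarseBall L x r :=
  fun _ hz => Finset.mem_coe.2 (mem_coarseBall.2 ⟨hz.1, hz.2.2.trans hbr⟩)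

lemma band_innerBand_subset :
    band σ n x (innerBand σ n) ⊆ coarseBall (σ.len n) x (9 * σ.unit (n + 1)) := by
  have := σ.unit_le_unit_succ n
  exact coarseAnnulus_subset_coarseBall (by rw [innerBand]; omega)

lemma band_outerBand_subset :
    band σ n x (outerBand σ n) ⊆ coarseBall (σ.len n) x (9 * σ.unit (n + 1)) := by
  have := σ.unit_le_unit_succ n
  exact coarseAnnulus_subset_coarseBall (by rw [outerBand]; omega)

lemma IsSeedPattern.le_dinf_of_bands (h₁ : IsSeedPattern σ n z₁ T₁) (h₂ : IsSeedPattern σ n z₂ T₂)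
    (hz₁ : z₁ ∈ band σ n x (innerBand σ n)) (hz₂ : z₂ ∈ band σ n x (outerBand σ n))
    {t₁ t₂ : ℕ × V d} (ht₁ : t₁ ∈ T₁) (ht₂ : t₂ ∈ T₂) : 80 * σ.unit n ≤ dinf t₁.2 t₂.2 := by
  have hz₁x := hz₁.2.2
  have hz₂x := hz₂.2.1
  rw [innerBand] at hz₁x
  rw [outerBand] at hz₂x
  have := h₁.dinf_le t₁ ht₁
  have := h₂.dinf_le t₂ ht₂
  have := dinf_triangle z₂ t₂.2 x
  have := dinf_triangle t₂.2 t₁.2 x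
  have := dinf_triangle t₁.2 z₁ x
  have := dinf_comm z₂ t₂.2
  have := dinf_comm t₂.2 t₁.2
  omega

lemma IsSeedPattern.disjoint_of_bands (h₁ : IsSeedPattern σ n z₁ T₁)
    (h₂ : IsSeedPattern σ n z₂ T₂) (hz₁ : z₁ ∈ band σ n x (innerBand σ n))
    (hz₂ : z₂ ∈ band σ n x (outerBand σ n)) : Disjoint T₁ T₂ :=
  Finset.disjoint_left.2 fun t ht₁ ht₂ => by
    have hle := h₁.le_dinf_of_bands h₂ hz₁ hz₂ ht₁ ht₂
    rw [dinf_self] at hle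
    linarith [σ.len_pos n, σ.len_le_unit n]

lemma IsSeedPattern.union_of_bands [DecidableEq (ℕ × V d)] (h₁ : IsSeedPattern σ n z₁ T₁)
    (h₂ : IsSeedPattern σ n z₂ T₂) (hz₁ : z₁ ∈ band σ n x (innerBand σ n))
    (hz₂ : z₂ ∈ band σ n x (outerBand σ n)) : IsSeedPattern σ (n + 1) x (T₁ ∪ T₂) := by
  have dinf_le {z : V d} (hz : z ∈ coarseBall (σ.len n) x (9 * σ.unit (n + 1))) :
      dinf z x ≤ 9 * σ.unit (n + 1) := (mem_coarseBall.1 hz).2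
  refine (h₁.succ (dinf_le (band_innerBand_subset hz₁))).union
    (h₂.succ (dinf_le (band_outerBand_subset hz₂))) fun t₁ ht₁ t₂ ht₂ _ => ?_
  have hκ : σ.κ * (2 * σ.len t₁.1 + 1) ≤ 3 * σ.unit t₁.1 := by
    rw [Scales.unit]
    nlinarith [σ.len_pos t₁.1]
  linarith [σ.unit_mono (h₁.level_le t₁ ht₁), h₁.le_dinf_of_bands h₂ hz₁ hz₂ ht₁ ht₂]

end SeedPatterns

section Decoupling

variable {d n : ℕ} {σ : Scales} {x : V d} {Ω : Type*} [MeasurableSpace Ω] {P : Measure Ω}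
  {F : V d → Set Ω} {H : ℕ → V d → Set Ω} {E : Set Ω} {c η q : ENNReal}

lemma measure_inter_biUnion_le_card_mul {ι : Type*} {s : Set ι} {t : Finset ι} (hst : s ⊆ t) {M : ℕ}
    (hM : t.card ≤ M) {A : ι → Set Ω} (h : ∀ i ∈ s, P (E ∩ A i) ≤ q) :
    P (E ∩ ⋃ i ∈ s, A i) ≤ M * q := by
  classical
  calc P (E ∩ ⋃ i ∈ s, A i) = P (⋃ i ∈ t.filter (· ∈ s), E ∩ A i) := by
        congr 1
        ext ω
        simp only [mem_inter_iff, mem_iUnion, Finset.mem_filter, exists_prop]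
        grind
    _ ≤ ∑ i ∈ t.filter (· ∈ s), P (E ∩ A i) := measure_biUnion_finset_le _ _
    _ ≤ ∑ _i ∈ t.filter (· ∈ s), q :=
        Finset.sum_le_sum fun i hi => h i (Finset.mem_filter.1 hi).2
    _ ≤ M * q := by
        rw [Finset.sum_const, nsmul_eq_mul]
        gcongr
        exact (Finset.card_filter_le _ _).trans hM

/-- The bound imposed on the failure probability of the seeds of level `m`. -/
def seedRate (c : ENNReal) (m : ℕ) : ENNReal := if m = 0 then c else c * (1 / 2) ^ 2 ^ m

/-- The event `E`, with `q` as a bound for its probability, behaves as if independent of the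
failures of the seeds near `x` up to level `n`. -/
def Decoupled (σ : Scales) (P : Measure Ω) (F : V d → Set Ω) (H : ℕ → V d → Set Ω) (c : ENNReal)
    (n : ℕ) (x : V d) (E : Set Ω) (q : ENNReal) : Prop :=
  ∀ T, IsSeedPattern σ n x T → P (E ∩ allFail F H T) ≤ q * ∏ t ∈ T, seedRate c t.1

lemma decoupled_univ (hC1 : CondC1 d σ.ℓ₀ σ.L₀ P F H) (hC2 : CondC2 d σ.ℓ₀ σ.L₀ σ.κ P F H)
    (hseed : ∀ m, ∀ z ∈ coarseLattice d (σ.len m), P (seed F H m z)ᶜ ≤ seedRate c m) (n : ℕ)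
    (x : V d) : Decoupled σ P F H c n x univ 1 := fun T hT => by
  rw [univ_inter, one_mul, measure_allFail hC1 hC2 hT.mem_lattice hT.spread]
  exact Finset.prod_le_prod' fun t ht => hseed t.1 t.2 (hT.mem_lattice t ht)

lemma Decoupled.inter_allFail {z₁ z₂ : V d} {T : Finset (ℕ × V d)}
    (hE : Decoupled σ P F H c (n + 1) x E q) (hz₁ : z₁ ∈ band σ n x (innerBand σ n))
    (hz₂ : z₂ ∈ band σ n x (outerBand σ n)) (hT : IsSeedPattern σ n z₁ T) :
    Decoupled σ P F H c n z₂ (E ∩ allFail F H T) (q * ∏ t ∈ T, seedRate c t.1) := fun T' hT' => by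
  classical
  have hunion : allFail F H (T ∪ T') = allFail F H T ∩ allFail F H T' :=
    Finset.set_biInter_inter _ _ _
  rw [inter_assoc, ← hunion, mul_assoc, ← Finset.prod_union (hT.disjoint_of_bands hT' hz₁ hz₂)]
  exact hE _ (hT.union_of_bands hT' hz₁ hz₂)

lemma Decoupled.measure_inter_badSeedEvent_le (hE : Decoupled σ P F H c n x E q) :
    P (E ∩ badSeedEvent σ F H n x) ≤ σ.maxBoxes d * (q * seedRate c n) := by
  have hunion : badSeedEvent σ F H n x =
      ⋃ z ∈ (coarseBall (σ.len n) x (10 * σ.unit n) : Set (V d)), (seed F H n z)ᶜ := by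
    ext ω
    simp [badSeedEvent, HasBadSeed]
  have := σ.unit_le_unit_succ n
  rw [hunion]
  refine measure_inter_biUnion_le_card_mul subset_rfl
    (σ.card_coarseBall_le_maxBoxes n x (by omega)) fun z hz => ?_
  simpa [allFail] using hE _ (isSeedPattern_singleton hz)

/-- Two bad points in opposite bands are bad because of disjoint, mutually distant sets of seeds, so
their probabilities multiply. -/
lemma Decoupled.measure_inter_badEvent_inter_badEvent_le {r : ENNReal} {z₁ z₂ : V d}
    (hr : ∀ z E q, Decoupled σ P F H c n z E q → P (E ∩ badEvent σ F H n z) ≤ q * r)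
    (hE : Decoupled σ P F H c (n + 1) x E q) (hz₁ : z₁ ∈ band σ n x (innerBand σ n))
    (hz₂ : z₂ ∈ band σ n x (outerBand σ n)) :
    P (E ∩ (badEvent σ F H n z₁ ∩ badEvent σ F H n z₂)) ≤ q * r * r := by
  have hdecoupled : Decoupled σ P F H c n z₁ (E ∩ badEvent σ F H n z₂) (q * r) := fun T hT => by
    rw [inter_right_comm, mul_right_comm]
    exact hr z₂ _ _ (hE.inter_allFail hz₁ hz₂ hT)
  rw [← inter_assoc, inter_right_comm]
  exact hr z₁ _ _ hdecoupled

lemma Decoupled.measure_inter_badEvent_succ_le {r : ENNReal}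
    (hr : ∀ z E q, Decoupled σ P F H c n z E q → P (E ∩ badEvent σ F H n z) ≤ q * r)
    (hE : Decoupled σ P F H c (n + 1) x E q) :
    P (E ∩ badEvent σ F H (n + 1) x) ≤
      q * (σ.maxBoxes d * seedRate c (n + 1) + (σ.maxBoxes d * r) ^ 2) := by
  have hpairs : P (E ∩ ⋃ z₁ ∈ band σ n x (innerBand σ n), ⋃ z₂ ∈ band σ n x (outerBand σ n),
      badEvent σ F H n z₁ ∩ badEvent σ F H n z₂) ≤
      σ.maxBoxes d * (σ.maxBoxes d * (q * r * r)) :=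
    measure_inter_biUnion_le_card_mul band_innerBand_subset
      (σ.card_coarseBall_le_maxBoxes n x le_rfl) fun _ hz₁ =>
    measure_inter_biUnion_le_card_mul band_outerBand_subset
      (σ.card_coarseBall_le_maxBoxes n x le_rfl) fun _ hz₂ =>
    hE.measure_inter_badEvent_inter_badEvent_le hr hz₁ hz₂
  rw [badEvent_succ, inter_union_distrib_left]
  refine (measure_union_le _ _).trans
    ((add_le_add hE.measure_inter_badSeedEvent_le hpairs).trans_eq ?_)
  ring

lemma Decoupled.measure_inter_badEvent_le (hc : σ.maxBoxes d * c ≤ η * (1 / 2))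
    (hη : (σ.maxBoxes d * η) ^ 2 ≤ η * (1 / 2)) (hE : Decoupled σ P F H c n x E q) :
    P (E ∩ badEvent σ F H n x) ≤ q * (η * (1 / 2) ^ 2 ^ n) := by
  induction n generalizing x E q with
  | zero =>
    calc P (E ∩ badEvent σ F H 0 x) ≤ σ.maxBoxes d * (q * seedRate c 0) :=
          hE.measure_inter_badSeedEvent_le
      _ = q * (σ.maxBoxes d * c) := by rw [seedRate, if_pos rfl]; ring
      _ ≤ q * (η * (1 / 2) ^ 2 ^ 0) := mul_le_mul' le_rfl (by simpa using hc)
  | succ n ih =>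
    set M : ENNReal := (σ.maxBoxes d : ENNReal)
    have hpow : (1 / 2 : ENNReal) ^ 2 ^ (n + 1) = ((1 / 2) ^ 2 ^ n) ^ 2 := by
      rw [pow_succ 2 n, pow_mul]
    calc P (E ∩ badEvent σ F H (n + 1) x)
        ≤ q * (M * seedRate c (n + 1) + (M * (η * (1 / 2) ^ 2 ^ n)) ^ 2) :=
          hE.measure_inter_badEvent_succ_le fun _ _ _ => ih
      _ = q * ((M * c + (M * η) ^ 2) * (1 / 2) ^ 2 ^ (n + 1)) := by
          rw [seedRate, if_neg n.succ_ne_zero, hpow]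
          ring
      _ ≤ q * ((η * (1 / 2) + η * (1 / 2)) * (1 / 2) ^ 2 ^ (n + 1)) := by gcongr
      _ = q * (η * (1 / 2) ^ 2 ^ (n + 1)) := by rw [← mul_add, ENNReal.add_halves, mul_one]

lemma two_pow_add_succ_le (n i : ℕ) : 2 ^ n + (i + 1) ≤ 2 ^ (n + 1 + i) := by
  have hn : 1 ≤ 2 ^ n := Nat.one_le_two_pow
  have hi : i + 1 < 2 ^ (i + 1) := Nat.lt_two_pow_self
  rw [add_assoc, add_comm 1 i, pow_add]
  nlinarith

lemma measure_iUnion_badSeedEvent_le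
    (hE : ∀ m, Decoupled σ P F H c m x univ 1) (n : ℕ) :
    P (⋃ i, badSeedEvent σ F H (n + 1 + i) x) ≤ σ.maxBoxes d * c * (1 / 2) ^ 2 ^ n := by
  set M : ENNReal := (σ.maxBoxes d : ENNReal)
  have hlevel (i : ℕ) : P (badSeedEvent σ F H (n + 1 + i) x) ≤
      M * c * (1 / 2) ^ 2 ^ n * (1 / 2) ^ (i + 1) := by
    calc P (badSeedEvent σ F H (n + 1 + i) x) ≤ M * (c * (1 / 2) ^ 2 ^ (n + 1 + i)) := by
          simpa [seedRate] using (hE (n + 1 + i)).measure_inter_badSeedEvent_le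
      _ ≤ M * (c * (1 / 2) ^ (2 ^ n + (i + 1))) := by
          gcongr M * (c * ?_)
          exact pow_le_pow_right_of_le_one' (by simp) (two_pow_add_succ_le n i)
      _ = M * c * (1 / 2) ^ 2 ^ n * (1 / 2) ^ (i + 1) := by
          rw [pow_add]
          ring
  have hgeometric : ∑' i : ℕ, (1 / 2 : ENNReal) ^ (i + 1) = 1 := by
    rw [ENNReal.tsum_geometric_add_one, one_div, ENNReal.one_sub_inv_two, inv_inv,
      ENNReal.inv_mul_cancel (by simp) (by simp)]
  calc P (⋃ i, badSeedEvent σ F H (n + 1 + i) x)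
      ≤ ∑' i, P (badSeedEvent σ F H (n + 1 + i) x) := measure_iUnion_le _
    _ ≤ ∑' i, M * c * (1 / 2) ^ 2 ^ n * (1 / 2) ^ (i + 1) := ENNReal.tsum_le_tsum hlevel
    _ = M * c * (1 / 2) ^ 2 ^ n := by rw [ENNReal.tsum_mul_left, hgeometric, mul_one]

lemma measure_compl_gEvent_le (hd : 2 ≤ d) (hE : ∀ m, Decoupled σ P F H c m x univ 1)
    (hc : σ.maxBoxes d * c ≤ η * (1 / 2)) (hη : (σ.maxBoxes d * η) ^ 2 ≤ η * (1 / 2))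
    (annulus : Bool) (n : ℕ) :
    P (GEvent d σ.ℓ₀ σ.L₀ σ.κ (2 * σ.maxBoxes d) F H annulus n x)ᶜ ≤
      (η + σ.maxBoxes d * c) * (1 / 2) ^ 2 ^ n := by
  have hsub : (GEvent d σ.ℓ₀ σ.L₀ σ.κ (2 * σ.maxBoxes d) F H annulus n x)ᶜ ⊆
      badEvent σ F H n x ∪ ⋃ i, badSeedEvent σ F H (n + 1 + i) x := by
    rw [compl_subset_comm, compl_union]
    rintro ω ⟨hbad, htail⟩
    refine mem_gEvent hd annulus hbad fun j hj hω => htail (mem_iUnion.2 ⟨j - (n + 1), ?_⟩)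
    rwa [Nat.add_sub_cancel' hj]
  have hbad : P (badEvent σ F H n x) ≤ η * (1 / 2) ^ 2 ^ n := by
    simpa only [univ_inter, one_mul] using (hE n).measure_inter_badEvent_le hc hη
  rw [add_mul]
  exact (measure_mono hsub).trans ((measure_union_le _ _).trans
    (add_le_add hbad (measure_iUnion_badSeedEvent_le hE n)))

lemma exists_rates {M : ℕ} (hM : 1 ≤ M) : ∃ c ∈ Ioo (0 : ℝ) 1, ∃ η : ENNReal,
    M * ENNReal.ofReal c ≤ η * (1 / 2) ∧ (M * η) ^ 2 ≤ η * (1 / 2) ∧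
      η + M * ENNReal.ofReal c ≤ 1 := by
  have hM' : (1 : ℝ) ≤ M := by exact_mod_cast hM
  have hM₀ : (0 : ℝ) < M := by linarith
  have hM₂ : (1 : ℝ) ≤ (M : ℝ) ^ 2 := one_le_pow₀ hM'
  have hM₃ : (1 : ℝ) ≤ (M : ℝ) ^ 3 := one_le_pow₀ hM'
  have hhalf : (1 / 2 : ENNReal) = ENNReal.ofReal (1 / 2) := by
    rw [ENNReal.ofReal_div_of_pos (by norm_num)]
    simp
  have hMc : (M : ENNReal) * ENNReal.ofReal (1 / (4 * M ^ 3)) =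
      ENNReal.ofReal (1 / (2 * M ^ 2) * (1 / 2)) := by
    rw [← ENNReal.ofReal_natCast, ← ENNReal.ofReal_mul hM₀.le]
    congr 1
    field_simp
    norm_num
  refine ⟨1 / (4 * M ^ 3), ⟨by positivity, ?_⟩, ENNReal.ofReal (1 / (2 * M ^ 2)), ?_, ?_, ?_⟩
  · rw [div_lt_one (by positivity)]
    linarith
  · rw [hMc, hhalf, ← ENNReal.ofReal_mul (by positivity)]
  · rw [hhalf, ← ENNReal.ofReal_natCast, ← ENNReal.ofReal_mul hM₀.le,
      ← ENNReal.ofReal_pow (by positivity), ← ENNReal.ofReal_mul (by positivity)]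
    refine ENNReal.ofReal_le_ofReal (le_of_eq ?_)
    field_simp
  · rw [hMc, ← ENNReal.ofReal_add (by positivity) (by positivity), ENNReal.ofReal_le_one]
    have : 1 / (2 * (M : ℝ) ^ 2) ≤ 1 / 2 := one_div_le_one_div_of_le (by norm_num) (by linarith)
    linarith

lemma ofReal_div_two_pow (c : ℝ) (k : ℕ) :
    ENNReal.ofReal (c / 2 ^ k) = ENNReal.ofReal c * (1 / 2) ^ k := by
  rw [ENNReal.ofReal_div_of_pos (by positivity), ENNReal.ofReal_pow (by norm_num),
    ENNReal.div_eq_inv_mul, mul_comm, ENNReal.ofReal_ofNat, one_div, ENNReal.inv_pow]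

end Decoupling

lemma one_sub_le_measure_gEvent {d : ℕ} (hd : 2 ≤ d) (σ : Scales) {Ω : Type*}
    [MeasurableSpace Ω] {P : Measure Ω} [IsProbabilityMeasure P]
    {F : V d → Set Ω} {H : ℕ → V d → Set Ω} {c : ℝ} {η : ENNReal}
    (hC1 : CondC1 d σ.ℓ₀ σ.L₀ P F H) (hC2 : CondC2 d σ.ℓ₀ σ.L₀ σ.κ P F H)
    (hF : ∀ x ∈ latt d σ.ℓ₀ σ.L₀ 0, P (F x)ᶜ ≤ ENNReal.ofReal c)
    (hH : ∀ n : ℕ, 1 ≤ n → ∀ x ∈ latt d σ.ℓ₀ σ.L₀ n,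
      P (H n x)ᶜ ≤ ENNReal.ofReal (c / 2 ^ 2 ^ n))
    (hc : σ.maxBoxes d * ENNReal.ofReal c ≤ η * (1 / 2))
    (hη : (σ.maxBoxes d * η) ^ 2 ≤ η * (1 / 2))
    (hsum : η + σ.maxBoxes d * ENNReal.ofReal c ≤ 1) (annulus : Bool) (n : ℕ) (x : V d) :
    1 - (1 / 2 : ENNReal) ^ 2 ^ n ≤
      P (GEvent d σ.ℓ₀ σ.L₀ σ.κ (2 * σ.maxBoxes d) F H annulus n x) := by
  have hseed (m) (z) (hz : z ∈ coarseLattice d (σ.len m)) :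
      P (seed F H m z)ᶜ ≤ seedRate (ENNReal.ofReal c) m := by
    obtain rfl | hm := Nat.eq_zero_or_pos m
    · exact hF z hz
    · rw [seed, seedRate, if_neg hm.ne', if_neg hm.ne', ← ofReal_div_two_pow]
      exact hH m hm z hz
  have hcompl : P (GEvent d σ.ℓ₀ σ.L₀ σ.κ (2 * σ.maxBoxes d) F H annulus n x)ᶜ ≤
      (1 / 2) ^ 2 ^ n :=
    (measure_compl_gEvent_le hd (fun m => decoupled_univ hC1 hC2 hseed m x) hc hη annulus
      n).trans (mul_le_of_le_one_left' hsum)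
  rw [tsub_le_iff_right]
  calc 1 = P univ := measure_univ.symm
    _ ≤ _ := (measure_univ_le_add_compl _).trans (add_le_add le_rfl hcompl)

theorem good_bridges_general {d κ ℓ₀ : ℕ} (hd : 2 ≤ d) (hκ : 20 ≤ κ) (hℓ₀ : 1000 ≤ ℓ₀) :
    ∃ K : ℕ, 100 ≤ K ∧ ∃ c₁ c₂ : ℝ, c₁ ∈ Ioo (0 : ℝ) 1 ∧ c₂ ∈ Ioo (0 : ℝ) 1 ∧
      ∀ L₀ : ℕ, 1 ≤ L₀ →
        ∀ {Ω : Type*} [MeasurableSpace Ω] (P : Measure Ω), IsProbabilityMeasure P →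
          ∀ (F : V d → Set Ω) (H : ℕ → V d → Set Ω),
            CondC1 d ℓ₀ L₀ P F H → CondC2 d ℓ₀ L₀ κ P F H →
            (∀ x ∈ latt d ℓ₀ L₀ 0, P (F x)ᶜ ≤ ENNReal.ofReal c₁) →
            (∀ n : ℕ, 1 ≤ n → ∀ x ∈ latt d ℓ₀ L₀ n,
              P (H n x)ᶜ ≤ ENNReal.ofReal (c₂ / 2 ^ 2 ^ n)) →
            ∀ (annulus : Bool) (n : ℕ) (x : V d),
              1 - (1 / 2 : ENNReal) ^ 2 ^ n ≤ P (GEvent d ℓ₀ L₀ κ K F H annulus n x) := by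
  obtain ⟨M, hM⟩ : ∃ M, M = (9 * κ * ℓ₀ + 1) ^ d := ⟨_, rfl⟩
  have hM₁ : 100 ≤ M :=
    hM.symm ▸ (⟨ℓ₀, 1, κ, hℓ₀, le_rfl, hκ⟩ : Scales).hundred_le_maxBoxes (by omega)
  obtain ⟨c, hc, η, hMc, hMη, hη⟩ := exists_rates (M := M) (by omega)
  refine ⟨2 * M, by omega, c, c, hc, hc, ?_⟩
  intro L₀ hL₀ Ω _ P _ F H hC1 hC2 hF hH
  obtain rfl : M = (⟨ℓ₀, L₀, κ, hℓ₀, hL₀, hκ⟩ : Scales).maxBoxes d := hM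
  exact one_sub_le_measure_gEvent hd ⟨ℓ₀, L₀, κ, hℓ₀, hL₀, hκ⟩ hC1 hC2 hF hH hMc hMη hη

/-- Theorem 2.3: existence of good bridges with overwhelming probability. -/
theorem good_bridges (d : ℕ) (hd : 3 ≤ d) (κ : ℕ) (hκ : 20 ≤ κ) :
    ∃ C : ℕ, ∀ ℓ₀ : ℕ, C ≤ ℓ₀ →
      ∃ K : ℕ, 100 ≤ K ∧ ∃ c₁ c₂ : ℝ, c₁ ∈ Set.Ioo (0 : ℝ) 1 ∧ c₂ ∈ Set.Ioo (0 : ℝ) 1 ∧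
        ∃ C' : ℕ, ∀ L₀ : ℕ, C' ≤ L₀ →
          ∀ {Ω : Type} [MeasurableSpace Ω] (P : Measure Ω), IsProbabilityMeasure P →
            ∀ (F : V d → Set Ω) (H : ℕ → V d → Set Ω),
              CondC1 d ℓ₀ L₀ P F H → CondC2 d ℓ₀ L₀ κ P F H →
              (∀ x ∈ latt d ℓ₀ L₀ 0, P (F x)ᶜ ≤ ENNReal.ofReal c₁) →
              (∀ n : ℕ, 1 ≤ n → ∀ x ∈ latt d ℓ₀ L₀ n,
                P (H n x)ᶜ ≤ ENNReal.ofReal (c₂ / 2 ^ 2 ^ n)) →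
              ∀ (annulus : Bool) (n : ℕ), ∀ x ∈ latt d ℓ₀ L₀ n,
                1 - (1 / 2 : ENNReal) ^ 2 ^ n ≤
                  P (GEvent d ℓ₀ L₀ κ K F H annulus n x) := by
  refine ⟨1000, fun ℓ₀ hℓ₀ => ?_⟩
  obtain ⟨K, hK, c₁, c₂, hc₁, hc₂, h⟩ := good_bridges_general (by omega : 2 ≤ d) hκ hℓ₀
  exact ⟨K, hK, c₁, c₂, hc₁, hc₂, 1, fun L₀ hL₀ Ω _ P hP F H hC1 hC2 hF hH annulus n x _ =>
    h L₀ hL₀ P hP F H hC1 hC2 hF hH annulus n x⟩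

end
end GFFperc
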